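/- Downward closure after exch: suppose that for each hypothesis e ≤ f ∈ H either e = 1 or e = a for some letter a ∈ Σ, and let L ⊆ SP. If U, V ∈ SP with U ⊑^sp V and V ∈ cl_H(cl_exch(L)), then U ∈ cl_H(cl_exch(L)). -/

import Mathlib

namespace CKAH

open Classical

/-! ### Labelled posets and pomsets -/

/-- A labelled poset over alphabet `A`: a finite carrier with a partial order and labelling. -/
structure LPoset (A : Type) : Type 1 where
  carrier : Type
  [fin : Fintype carrier]
  [ord : PartialOrder carrier]
  lab : carrier → A

attribute [instance] LPoset.fin LPoset.ord

/-- Isomorphism of labelled posets: an order isomorphism preserving labels. -/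
def LPoset.Iso {A : Type} (u v : LPoset A) : Prop :=
  ∃ e : u.carrier ≃o v.carrier, ∀ x, v.lab (e x) = u.lab x

theorem LPoset.iso_equivalence (A : Type) : Equivalence (LPoset.Iso (A := A)) where
  refl u := ⟨OrderIso.refl _, fun _ => rfl⟩
  symm := by
    rintro u v ⟨e, he⟩
    exact ⟨e.symm, fun x => by rw [← he (e.symm x), OrderIso.apply_symm_apply]⟩
  trans := by
    rintro u v w ⟨e, he⟩ ⟨f, hf⟩
    exact ⟨e.trans f, fun x => by rw [OrderIso.trans_apply, hf, he]⟩

instance pomSetoid (A : Type) : Setoid (LPoset A) := ⟨LPoset.Iso, LPoset.iso_equivalence A⟩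

/-- A pomset is an isomorphism class of labelled posets. -/
def Pomset (A : Type) : Type 1 := Quotient (pomSetoid A)

/-- Sequential composition of labelled posets: disjoint union, everything on the left
below everything on the right (lexicographic sum order). -/
def LPoset.seqL {A : Type} (u v : LPoset A) : LPoset A where
  carrier := u.carrier ⊕ₗ v.carrier
  fin := inferInstanceAs (Fintype (u.carrier ⊕ v.carrier))
  lab := fun x => Sum.elim u.lab v.lab (ofLex x)

/-- Parallel composition of labelled posets: disjoint union with no cross ordering. -/
def LPoset.parL {A : Type} (u v : LPoset A) : LPoset A where
  carrier := u.carrier ⊕ v.carrier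
  lab := Sum.elim u.lab v.lab

def Pomset.seq {A : Type} : Pomset A → Pomset A → Pomset A :=
  Quotient.map₂ LPoset.seqL (by
    rintro u₁ u₂ ⟨e, he⟩ v₁ v₂ ⟨f, hf⟩
    refine ⟨(RelIso.sumLexCongr e f :
      (u₁.carrier ⊕ₗ v₁.carrier) ≃o (u₂.carrier ⊕ₗ v₂.carrier)), ?_⟩
    rintro (x | x)
    · exact he x
    · exact hf x)

/-- Order isomorphism between disjoint-union orders, from component isomorphisms. -/
def sumOrderIso {α β γ δ : Type} [PartialOrder α] [PartialOrder β] [PartialOrder γ]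
    [PartialOrder δ] (e : α ≃o γ) (f : β ≃o δ) : (α ⊕ β) ≃o (γ ⊕ δ) where
  toEquiv := Equiv.sumCongr e.toEquiv f.toEquiv
  map_rel_iff' := by
    rintro (x | x) (y | y) <;> simp [Sum.le_def, e.le_iff_le, f.le_iff_le]

def Pomset.par {A : Type} : Pomset A → Pomset A → Pomset A :=
  Quotient.map₂ LPoset.parL (by
    rintro u₁ u₂ ⟨e, he⟩ v₁ v₂ ⟨f, hf⟩
    refine ⟨sumOrderIso e f, ?_⟩
    rintro (x | x)
    · exact he x
    · exact hf x)

def LPoset.emptyL (A : Type) : LPoset A := { carrier := Fin 0, lab := fun x => x.elim0 }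

def LPoset.singleL {A : Type} (a : A) : LPoset A := { carrier := PUnit, lab := fun _ => a }

/-- The empty pomset `1`. -/
def Pomset.empty (A : Type) : Pomset A := ⟦LPoset.emptyL A⟧

/-- The single-letter pomset. -/
def Pomset.single {A : Type} (a : A) : Pomset A := ⟦LPoset.singleL a⟧

/-- Subsumption on labelled posets: `u ⊑ v` iff there is a label-preserving
order-preserving bijection from the carrier of `v` to that of `u`. -/
def LPoset.subL {A : Type} (u v : LPoset A) : Prop :=
  ∃ h : v.carrier ≃ u.carrier,
    (∀ x, u.lab (h x) = v.lab x) ∧ ∀ x y : v.carrier, x ≤ y → h x ≤ h y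

/-- Subsumption of pomsets: `Pomset.sub U V` means `U ⊑ V`. -/
def Pomset.sub {A : Type} : Pomset A → Pomset A → Prop :=
  Quotient.lift₂ LPoset.subL (by
    rintro u₁ v₁ u₂ v₂ ⟨e, he⟩ ⟨f, hf⟩
    refine propext ⟨?_, ?_⟩
    · rintro ⟨h, hl, hm⟩
      refine ⟨(f.toEquiv.symm.trans h).trans e.toEquiv, fun x => ?_, fun x y hxy => ?_⟩
      · show u₂.lab (e (h (f.symm x))) = v₂.lab x
        rw [he, hl, ← hf (f.symm x), OrderIso.apply_symm_apply]
      · simp only [Equiv.trans_apply]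
        exact e.le_iff_le.mpr (hm _ _ (f.symm.le_iff_le.mpr hxy))
    · rintro ⟨h, hl, hm⟩
      refine ⟨(f.toEquiv.trans h).trans e.toEquiv.symm, fun x => ?_, fun x y hxy => ?_⟩
      · show u₁.lab (e.symm (h (f x))) = v₁.lab x
        rw [← he (e.symm (h (f x))), OrderIso.apply_symm_apply, hl, hf]
      · simp only [Equiv.trans_apply]
        exact e.symm.le_iff_le.mpr (hm _ _ (f.le_iff_le.mpr hxy)))

def LPoset.isWordL {A : Type} (u : LPoset A) : Prop := ∀ x y : u.carrier, x ≤ y ∨ y ≤ x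

/-- A pomset is a word when it is totally ordered. -/
def Pomset.IsWord {A : Type} : Pomset A → Prop :=
  Quotient.lift LPoset.isWordL (by
    rintro u v ⟨e, -⟩
    refine propext ⟨fun h x y => ?_, fun h x y => ?_⟩
    · rcases h (e.symm x) (e.symm y) with h' | h'
      · exact Or.inl (e.symm.le_iff_le.mp h')
      · exact Or.inr (e.symm.le_iff_le.mp h')
    · rcases h (e x) (e y) with h' | h'
      · exact Or.inl (e.le_iff_le.mp h')
      · exact Or.inr (e.le_iff_le.mp h'))

def LPoset.mapL {A B : Type} (f : A → B) (u : LPoset A) : LPoset B :=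
  { carrier := u.carrier, lab := f ∘ u.lab }

/-- Relabelling of pomsets along a function on letters. -/
def Pomset.map {A B : Type} (f : A → B) : Pomset A → Pomset B :=
  Quotient.map (LPoset.mapL f)
    (by rintro u v ⟨e, he⟩; exact ⟨e, fun x => congrArg f (he x)⟩)

def LPoset.overL {A : Type} (Γ : Set A) (u : LPoset A) : Prop := ∀ x, u.lab x ∈ Γ

/-- All labels of the pomset belong to `Γ`. -/
def Pomset.Over {A : Type} (Γ : Set A) : Pomset A → Prop :=
  Quotient.lift (LPoset.overL Γ) (by
    rintro u v ⟨e, he⟩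
    refine propext ⟨fun h x => ?_, fun h x => ?_⟩
    · have h2 := he (e.symm x)
      rw [OrderIso.apply_symm_apply] at h2
      rw [h2]; exact h _
    · rw [← he x]; exact h _)

/-- Series-parallel pomsets. -/
inductive Pomset.IsSP {A : Type} : Pomset A → Prop
  | empty : Pomset.IsSP (Pomset.empty A)
  | single (a : A) : Pomset.IsSP (Pomset.single a)
  | seq {U V : Pomset A} : Pomset.IsSP U → Pomset.IsSP V → Pomset.IsSP (Pomset.seq U V)
  | par {U V : Pomset A} : Pomset.IsSP U → Pomset.IsSP V → Pomset.IsSP (Pomset.par U V)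

def SPset (A : Type) : Set (Pomset A) := {U | U.IsSP}

/-! ### Pomset contexts -/

/-- Contexts are pomsets over `Option A`, where `none` plays the role of `*`.
`uniqueStarL` says there is exactly one `*`-labelled node. -/
def LPoset.uniqueStarL {A : Type} (c : LPoset (Option A)) : Prop := ∃! x, c.lab x = none

theorem LPoset.uniqueStarL_congr {A : Type} {u v : LPoset (Option A)}
    (e : u.carrier ≃o v.carrier) (he : ∀ x, v.lab (e x) = u.lab x) :
    u.uniqueStarL ↔ v.uniqueStarL := by
  constructor
  · rintro ⟨x, hx, hux⟩
    refine ⟨e x, show v.lab (e x) = none by rw [he]; exact hx, fun y hy => ?_⟩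
    have h2 := he (e.symm y)
    rw [OrderIso.apply_symm_apply] at h2
    have h3 : e.symm y = x := hux _ (h2.symm.trans hy)
    rw [← h3, OrderIso.apply_symm_apply]
  · rintro ⟨x, hx, hvx⟩
    refine ⟨e.symm x, ?_, fun y hy => ?_⟩
    · show u.lab (e.symm x) = none
      have h2 := he (e.symm x)
      rw [OrderIso.apply_symm_apply] at h2
      rw [← h2]; exact hx
    · have h3 : e y = x := hvx _ (show v.lab (e y) = none by rw [he]; exact hy)
      rw [← h3, OrderIso.symm_apply_apply]

/-- A pomset context: exactly one node labelled `*`. -/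
def Pomset.IsCtx {A : Type} : Pomset (Option A) → Prop :=
  Quotient.lift LPoset.uniqueStarL
    (fun _ _ h => propext (LPoset.uniqueStarL_congr h.choose h.choose_spec))

/-- Series-parallel pomset contexts. -/
def Pomset.IsSPCtx {A : Type} (C : Pomset (Option A)) : Prop := C.IsCtx ∧ C.IsSP

/-- Sequential (totally ordered) pomset contexts. -/
def Pomset.IsSeqCtx {A : Type} (C : Pomset (Option A)) : Prop := C.IsCtx ∧ C.IsWord

/-- The trivial context `*`. -/
def starCtx (A : Type) : Pomset (Option A) := Pomset.single (none : Option A)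

theorem option_get_eq_get {α : Type} {o₁ o₂ : Option α} (h : o₁ = o₂) (h₁ : o₁.isSome)
    (h₂ : o₂.isSome) : o₁.get h₁ = o₂.get h₂ := by subst h; rfl

/-- The order of `C[U]`: the orders of `C` (restricted away from `*`) and of `U`, with a
point of `C` below (resp. above) all of `U` when it is below (resp. above) the unique
`*`-node of `C`.  (For well-definedness of the order, the cross-relations are guarded by
the requirement that the star node is unique, which holds for every genuine context.) -/
def LPoset.insLe {A : Type} (c : LPoset (Option A)) (u : LPoset A) :
    ({x : c.carrier // c.lab x ≠ none} ⊕ u.carrier) →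
    ({x : c.carrier // c.lab x ≠ none} ⊕ u.carrier) → Prop
  | Sum.inl x, Sum.inl y => x.val ≤ y.val
  | Sum.inr x, Sum.inr y => x ≤ y
  | Sum.inl x, Sum.inr _ => c.uniqueStarL ∧ ∃ s, c.lab s = none ∧ x.val ≤ s
  | Sum.inr _, Sum.inl y => c.uniqueStarL ∧ ∃ s, c.lab s = none ∧ s ≤ y.val

/-- Insertion of a labelled poset `u` into the gap of a context `c`: the `*`-labelled
node is removed and `u` is put in its place, inheriting the order relations of `*`. -/
noncomputable def LPoset.insL {A : Type} (c : LPoset (Option A)) (u : LPoset A) :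
    LPoset A where
  carrier := {x : c.carrier // c.lab x ≠ none} ⊕ u.carrier
  fin := by classical exact inferInstance
  ord :=
    { le := LPoset.insLe c u
      lt := fun p q => LPoset.insLe c u p q ∧ ¬ LPoset.insLe c u q p
      lt_iff_le_not_ge := fun _ _ => Iff.rfl
      le_refl := by rintro (x | x) <;> exact le_refl _
      le_trans := by
        rintro (x | x) (y | y) (z | z) h1 h2
        · exact le_trans h1 h2
        · obtain ⟨hu, s, hs, hys⟩ := h2
          exact ⟨hu, s, hs, le_trans h1 hys⟩
        · obtain ⟨hu, s, hs, hxs⟩ := h1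
          obtain ⟨-, t, ht, htz⟩ := h2
          obtain ⟨w, hw, huniq⟩ := hu
          have hst : s = t := (huniq s hs).trans (huniq t ht).symm
          exact le_trans (hst ▸ hxs) htz
        · exact h1
        · obtain ⟨hu, s, hs, hsy⟩ := h1
          exact ⟨hu, s, hs, le_trans hsy h2⟩
        · obtain ⟨hu, s, hs, hsy⟩ := h1
          obtain ⟨-, t, ht, hyt⟩ := h2
          obtain ⟨w, hw, huniq⟩ := hu
          have hst : s = t := (huniq s hs).trans (huniq t ht).symm
          have hy : y.val = s := le_antisymm (hst.symm ▸ hyt) hsy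
          exact absurd (hy.symm ▸ hs) y.prop
        · exact h2
        · exact le_trans h1 h2
      le_antisymm := by
        rintro (x | x) (y | y) h1 h2
        · exact congrArg Sum.inl (Subtype.ext (le_antisymm h1 h2))
        · obtain ⟨hu, s, hs, hxs⟩ := h1
          obtain ⟨-, t, ht, htx⟩ := h2
          obtain ⟨w, hw, huniq⟩ := hu
          have hst : s = t := (huniq s hs).trans (huniq t ht).symm
          have hx : x.val = s := le_antisymm hxs (hst.symm ▸ htx)
          exact absurd (hx.symm ▸ hs) x.prop
        · obtain ⟨hu, s, hs, hsy⟩ := h1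
          obtain ⟨-, t, ht, hyt⟩ := h2
          obtain ⟨w, hw, huniq⟩ := hu
          have hst : s = t := (huniq s hs).trans (huniq t ht).symm
          have hy : y.val = s := le_antisymm (hst.symm ▸ hyt) hsy
          exact absurd (hy.symm ▸ hs) y.prop
        · exact congrArg Sum.inr (le_antisymm h1 h2) }
  lab := Sum.elim (fun x => (c.lab x.val).get (Option.isSome_iff_ne_none.mpr x.prop)) u.lab

/-- `Pomset.ins C U` is `C[U]`: plugging the pomset `U` into the gap of the context `C`. -/
noncomputable def Pomset.ins {A : Type} : Pomset (Option A) → Pomset A → Pomset A :=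
  Quotient.map₂ LPoset.insL (by
    rintro c₁ c₂ ⟨e, he⟩ u₁ u₂ ⟨f, hf⟩
    have hstar : c₁.uniqueStarL ↔ c₂.uniqueStarL := LPoset.uniqueStarL_congr e he
    refine ⟨{ toEquiv := Equiv.sumCongr
                (e.toEquiv.subtypeEquiv fun x => by
                  rw [show c₂.lab (e.toEquiv x) = c₁.lab x from he x]) f.toEquiv
              map_rel_iff' := ?_ }, ?_⟩
    · rintro (x | x) (y | y)
      · exact e.le_iff_le
      · show (c₂.uniqueStarL ∧ ∃ s, c₂.lab s = none ∧ (e x.val : c₂.carrier) ≤ s) ↔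
             (c₁.uniqueStarL ∧ ∃ s, c₁.lab s = none ∧ x.val ≤ s)
        constructor
        · rintro ⟨hu, s, hs, hxs⟩
          refine ⟨hstar.mpr hu, e.symm s, ?_, ?_⟩
          · have h2 := he (e.symm s)
            rw [OrderIso.apply_symm_apply] at h2
            rw [← h2]; exact hs
          · exact e.le_iff_le.mp (by rw [OrderIso.apply_symm_apply]; exact hxs)
        · rintro ⟨hu, s, hs, hxs⟩
          exact ⟨hstar.mp hu, e s, by rw [he]; exact hs, e.le_iff_le.mpr hxs⟩
      · show (c₂.uniqueStarL ∧ ∃ s, c₂.lab s = none ∧ s ≤ (e y.val : c₂.carrier)) ↔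
             (c₁.uniqueStarL ∧ ∃ s, c₁.lab s = none ∧ s ≤ y.val)
        constructor
        · rintro ⟨hu, s, hs, hsy⟩
          refine ⟨hstar.mpr hu, e.symm s, ?_, ?_⟩
          · have h2 := he (e.symm s)
            rw [OrderIso.apply_symm_apply] at h2
            rw [← h2]; exact hs
          · exact e.le_iff_le.mp (by rw [OrderIso.apply_symm_apply]; exact hsy)
        · rintro ⟨hu, s, hs, hsy⟩
          exact ⟨hstar.mp hu, e s, by rw [he]; exact hs, e.le_iff_le.mpr hsy⟩
      · exact f.le_iff_le
    · rintro (x | x)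
      · exact option_get_eq_get (he x.val) _ _
      · exact hf x)

/-! ### Pomset languages -/

abbrev Lang (A : Type) := Set (Pomset A)

def Lang.seq {A : Type} (L K : Lang A) : Lang A :=
  {W | ∃ U ∈ L, ∃ V ∈ K, W = Pomset.seq U V}

def Lang.par {A : Type} (L K : Lang A) : Lang A :=
  {W | ∃ U ∈ L, ∃ V ∈ K, W = Pomset.par U V}

def Lang.pow {A : Type} (L : Lang A) : ℕ → Lang A
  | 0 => {Pomset.empty A}
  | n + 1 => Lang.seq (Lang.pow L n) L

def Lang.star {A : Type} (L : Lang A) : Lang A := ⋃ n, L.pow n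

/-- Application of a context to a language: `C[L] = {C[U] : U ∈ L}`. -/
def Ctx.img {A : Type} (C : Pomset (Option A)) (L : Lang A) : Lang A :=
  {W | ∃ U ∈ L, W = C.ins U}

/-! ### CKA terms and semantics -/

inductive Term (A : Type) : Type
  | zero : Term A
  | one : Term A
  | var : A → Term A
  | add : Term A → Term A → Term A
  | seq : Term A → Term A → Term A
  | par : Term A → Term A → Term A
  | star : Term A → Term A

/-- Pomset language semantics of CKA terms. -/
def Term.lang {A : Type} : Term A → Lang A
  | .zero => ∅
  | .one => {Pomset.empty A}
  | .var a => {Pomset.single a}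
  | .add e f => e.lang ∪ f.lang
  | .seq e f => Lang.seq e.lang f.lang
  | .par e f => Lang.par e.lang f.lang
  | .star e => Lang.star e.lang

/-- Sets of hypotheses: a hypothesis `e ≤ f` is the pair `(e, f)`. -/
abbrev HypSet (A : Type) := Set (Term A × Term A)

/-- The congruence `≡^H` on CKA terms generated by the CKA axioms and the hypotheses `H`
(the constructor `hyp` encodes `e ≦^H f`, i.e. `e + f ≡^H f`, for `e ≤ f ∈ H`). -/
inductive CongH {A : Type} (H : HypSet A) : Term A → Term A → Prop
  | refl (e) : CongH H e e
  | symm {e f} : CongH H e f → CongH H f e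
  | trans {e f g} : CongH H e f → CongH H f g → CongH H e g
  | addCong {e e' f f'} : CongH H e e' → CongH H f f' → CongH H (.add e f) (.add e' f')
  | seqCong {e e' f f'} : CongH H e e' → CongH H f f' → CongH H (.seq e f) (.seq e' f')
  | parCong {e e' f f'} : CongH H e e' → CongH H f f' → CongH H (.par e f) (.par e' f')
  | starCong {e e'} : CongH H e e' → CongH H (.star e) (.star e')
  | addZero (e) : CongH H (.add e .zero) e
  | addIdem (e) : CongH H (.add e e) e
  | addComm (e f) : CongH H (.add e f) (.add f e)
  | addAssoc (e f g) : CongH H (.add e (.add f g)) (.add (.add e f) g)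
  | seqAssoc (e f g) : CongH H (.seq e (.seq f g)) (.seq (.seq e f) g)
  | seqDistL (e f g) : CongH H (.seq e (.add f g)) (.add (.seq e f) (.seq e g))
  | seqDistR (e f g) : CongH H (.seq (.add e f) g) (.add (.seq e g) (.seq f g))
  | seqOneR (e) : CongH H (.seq e .one) e
  | seqOneL (e) : CongH H (.seq .one e) e
  | seqZeroR (e) : CongH H (.seq e .zero) .zero
  | seqZeroL (e) : CongH H (.seq .zero e) .zero
  | parComm (e f) : CongH H (.par e f) (.par f e)
  | parOne (e) : CongH H (.par e .one) e
  | parZero (e) : CongH H (.par e .zero) .zero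
  | parAssoc (e f g) : CongH H (.par e (.par f g)) (.par (.par e f) g)
  | parDist (e f g) : CongH H (.par e (.add f g)) (.add (.par e f) (.par e g))
  | starUnfoldL (e) : CongH H (.add .one (.seq e (.star e))) (.star e)
  | starUnfoldR (e) : CongH H (.add .one (.seq (.star e) e)) (.star e)
  | lfpL {e f g} : CongH H (.add (.add e (.seq f g)) g) g →
      CongH H (.add (.seq (.star f) e) g) g
  | lfpR {e f g} : CongH H (.add (.add e (.seq f g)) f) f →
      CongH H (.add (.seq e (.star g)) f) f
  | hyp {e f} : (e, f) ∈ H → CongH H (.add e f) f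

/-- `e ≦^H f`, the natural order `e + f ≡^H f`. -/
def LeH {A : Type} (H : HypSet A) (e f : Term A) : Prop := CongH H (.add e f) f

/-- The `H`-closure of a pomset language, as an inductive predicate: the smallest language
containing `L` such that for all `e ≤ f ∈ H` and series-parallel contexts `C`,
if `C[⟦f⟧] ⊆ cl` then `C[⟦e⟧] ⊆ cl`. -/
inductive closure {A : Type} (H : HypSet A) (L : Lang A) : Pomset A → Prop
  | base {U} : U ∈ L → closure H L U
  | step {e f : Term A} (hef : (e, f) ∈ H) {C : Pomset (Option A)} (hC : C.IsSPCtx)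
      (hf : ∀ V ∈ f.lang, closure H L (C.ins V)) {U} (hU : U ∈ e.lang) :
      closure H L (C.ins U)

/-- `cl H L` is the `H`-closure of `L`. -/
def cl {A : Type} (H : HypSet A) (L : Lang A) : Lang A := {U | closure H L U}

/-- The sequential closure: like `cl` but only sequential contexts are used. -/
inductive seqClosure {A : Type} (H : HypSet A) (L : Lang A) : Pomset A → Prop
  | base {U} : U ∈ L → seqClosure H L U
  | step {e f : Term A} (hef : (e, f) ∈ H) {C : Pomset (Option A)} (hC : C.IsSeqCtx)
      (hf : ∀ V ∈ f.lang, seqClosure H L (C.ins V)) {U} (hU : U ∈ e.lang) :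
      seqClosure H L (C.ins U)

def seqCl {A : Type} (H : HypSet A) (L : Lang A) : Lang A := {U | seqClosure H L U}

/-! ### Implication, completeness, reductions -/

/-- `H` implies `H'`: every hypothesis of `H'` is derivable from `H`. -/
def Implies {A : Type} (H H' : HypSet A) : Prop := ∀ p ∈ H', LeH H p.1 p.2

/-- `H` is complete: semantic equivalence implies axiomatic equivalence. -/
def Complete {A : Type} (H : HypSet A) : Prop :=
  ∀ e f : Term A, cl H e.lang = cl H f.lang → CongH H e f

/-- A reduction from `H` to `H'` (presupposing that `H` implies `H'`). -/
structure IsReduction {A : Type} (H H' : HypSet A) (r : Term A → Term A) : Prop where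
  implies : Implies H H'
  equiv : ∀ e, CongH H e (r e)
  reflect : ∀ e f : Term A, cl H e.lang = cl H f.lang → cl H' (r e).lang = cl H' (r f).lang

def Reduces {A : Type} (H H' : HypSet A) : Prop := ∃ r, IsReduction H H' r

/-- A strong reduction from `H` to `H'`. -/
structure IsStrongReduction {A : Type} (H H' : HypSet A) (r : Term A → Term A)
    extends IsReduction H H' r : Prop where
  strong : ∀ e : Term A, cl H e.lang = cl H' (r e).lang

def StronglyReduces {A : Type} (H H' : HypSet A) : Prop := ∃ r, IsStrongReduction H H' r

/-- `H` factorises into `H₀` and `H₁`. -/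
def Factorises {A : Type} (H H₀ H₁ : HypSet A) : Prop :=
  Implies H H₀ ∧ Implies H H₁ ∧ ∀ L : Lang A, L ⊆ SPset A → cl H L = cl H₁ (cl H₀ L)

/-! ### The exchange hypotheses and sp-subsumption -/

/-- The exchange hypotheses `(e∥f)·(g∥h) ≤ (e·g)∥(f·h)`. -/
def exch (A : Type) : HypSet A :=
  {p | ∃ e f g h : Term A,
    p = (Term.seq (.par e f) (.par g h), Term.par (.seq e g) (.seq f h))}

/-- `⊑^sp`: the smallest precongruence on series-parallel pomsets satisfying the
exchange inequality. -/
inductive spSub {A : Type} : Pomset A → Pomset A → Prop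
  | refl {U : Pomset A} : U.IsSP → spSub U U
  | trans {U V W} : spSub U V → spSub V W → spSub U W
  | seqCong {U V U' V'} : spSub U V → spSub U' V' → spSub (Pomset.seq U U') (Pomset.seq V V')
  | parCong {U V U' V'} : spSub U V → spSub U' V' → spSub (Pomset.par U U') (Pomset.par V V')
  | exch {U V W X : Pomset A} : U.IsSP → V.IsSP → W.IsSP → X.IsSP →
      spSub (Pomset.seq (Pomset.par U V) (Pomset.par W X))
            (Pomset.par (Pomset.seq U W) (Pomset.seq V X))

/-! ### KA terms, grounded hypotheses, sequential reductions -/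

/-- A term is a KA term when it contains no `∥`. -/
def Term.noPar {A : Type} : Term A → Prop
  | .zero => True
  | .one => True
  | .var _ => True
  | .add e f => e.noPar ∧ f.noPar
  | .seq e f => e.noPar ∧ f.noPar
  | .par _ _ => False
  | .star e => e.noPar

/-- A non-empty word. -/
def IsNonemptyWord {A : Type} (W : Pomset A) : Prop := W.IsWord ∧ W ≠ Pomset.empty A

/-- A set of hypotheses is grounded when in each hypothesis `e ≤ f`, `e` is a KA term and
`⟦f⟧ = {W}` for a non-empty word `W`. -/
def Grounded {A : Type} (H : HypSet A) : Prop :=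
  ∀ p ∈ H, p.1.noPar ∧ ∃ W : Pomset A, IsNonemptyWord W ∧ p.2.lang = {W}

/-- `≡_KA^H`: the congruence on terms generated by the axioms of `≡` not involving `∥`
together with the hypotheses of `H`. -/
inductive KACong {A : Type} (H : HypSet A) : Term A → Term A → Prop
  | refl (e) : KACong H e e
  | symm {e f} : KACong H e f → KACong H f e
  | trans {e f g} : KACong H e f → KACong H f g → KACong H e g
  | addCong {e e' f f'} : KACong H e e' → KACong H f f' → KACong H (.add e f) (.add e' f')
  | seqCong {e e' f f'} : KACong H e e' → KACong H f f' → KACong H (.seq e f) (.seq e' f')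
  | starCong {e e'} : KACong H e e' → KACong H (.star e) (.star e')
  | addZero (e) : KACong H (.add e .zero) e
  | addIdem (e) : KACong H (.add e e) e
  | addComm (e f) : KACong H (.add e f) (.add f e)
  | addAssoc (e f g) : KACong H (.add e (.add f g)) (.add (.add e f) g)
  | seqAssoc (e f g) : KACong H (.seq e (.seq f g)) (.seq (.seq e f) g)
  | seqDistL (e f g) : KACong H (.seq e (.add f g)) (.add (.seq e f) (.seq e g))
  | seqDistR (e f g) : KACong H (.seq (.add e f) g) (.add (.seq e g) (.seq f g))
  | seqOneR (e) : KACong H (.seq e .one) e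
  | seqOneL (e) : KACong H (.seq .one e) e
  | seqZeroR (e) : KACong H (.seq e .zero) .zero
  | seqZeroL (e) : KACong H (.seq .zero e) .zero
  | starUnfoldL (e) : KACong H (.add .one (.seq e (.star e))) (.star e)
  | starUnfoldR (e) : KACong H (.add .one (.seq (.star e) e)) (.star e)
  | lfpL {e f g} : KACong H (.add (.add e (.seq f g)) g) g →
      KACong H (.add (.seq (.star f) e) g) g
  | lfpR {e f g} : KACong H (.add (.add e (.seq f g)) f) f →
      KACong H (.add (.seq e (.star g)) f) f
  | hyp {e f} : (e, f) ∈ H → KACong H (.add e f) f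

/-- A sequential reduction from `H` to `H'`. -/
structure IsSeqReduction {A : Type} (H H' : HypSet A) (r : Term A → Term A) : Prop where
  implies : Implies H H'
  equiv : ∀ e : Term A, e.noPar → KACong H e (r e)
  closure_eq : ∀ e : Term A, e.noPar → seqCl H e.lang = seqCl H' (r e).lang

/-- Extension of a map on (KA) terms to all CKA terms, homomorphically on `∥`. -/
def parExt {A : Type} (r : Term A → Term A) : Term A → Term A
  | .par e f => .par (parExt r e) (parExt r f)
  | e => r e

/-! ### Inductive characterisation of sp contexts -/

/-- The generators of series-parallel contexts (Lemma: `PC^sp` is the smallest such set). -/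
inductive GenCtx {A : Type} : Pomset (Option A) → Prop
  | star : GenCtx (Pomset.single (none : Option A))
  | seqL {U : Pomset A} {C} : U.IsSP → GenCtx C → GenCtx (Pomset.seq (Pomset.map some U) C)
  | seqR {C} {V : Pomset A} : GenCtx C → V.IsSP → GenCtx (Pomset.seq C (Pomset.map some V))
  | par {U : Pomset A} {C} : U.IsSP → GenCtx C → GenCtx (Pomset.par (Pomset.map some U) C)

/-! ### Reification -/

/-- Homomorphic extension of a letter map to terms. -/
def rTerm {A : Type} (r : A → Term A) : Term A → Term A
  | .zero => .zero
  | .one => .one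
  | .var a => r a
  | .add e f => .add (rTerm r e) (rTerm r f)
  | .seq e f => .seq (rTerm r e) (rTerm r f)
  | .par e f => .par (rTerm r e) (rTerm r f)
  | .star e => .star (rTerm r e)

/-- All letters of a term lie in `Γ`. -/
def TermOver {A : Type} (Γ : Set A) : Term A → Prop
  | .zero => True
  | .one => True
  | .var a => a ∈ Γ
  | .add e f => TermOver Γ e ∧ TermOver Γ f
  | .seq e f => TermOver Γ e ∧ TermOver Γ f
  | .par e f => TermOver Γ e ∧ TermOver Γ f
  | .star e => TermOver Γ e

/-- Extension of a letter map `r` to (series-parallel) pomsets, as a relation: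
`rMap r U V` means `V ∈ r(U)`. -/
inductive rMap {A : Type} (r : A → Term A) : Pomset A → Pomset A → Prop
  | one : rMap r (Pomset.empty A) (Pomset.empty A)
  | var (a : A) {V} : V ∈ (r a).lang → rMap r (Pomset.single a) V
  | seq {U U' V V'} : rMap r U V → rMap r U' V' →
      rMap r (Pomset.seq U U') (Pomset.seq V V')
  | par {U U' V V'} : rMap r U V → rMap r U' V' →
      rMap r (Pomset.par U U') (Pomset.par V V')

/-- Image of a language under (the pomset extension of) `r`. -/
def rImg {A : Type} (r : A → Term A) (L : Lang A) : Lang A := {V | ∃ U ∈ L, rMap r U V}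

/-- Series-parallel pomsets over the subalphabet `Γ`. -/
def SPover {A : Type} (Γ : Set A) : Lang A := {U | U.IsSP ∧ U.Over Γ}

/-- `r : Σ → Term Γ` is a reification from `H` to `H'`. -/
structure IsReification {A : Type} (Γ : Set A) (H H' : HypSet A) (r : A → Term A) : Prop where
  toGamma : ∀ a : A, TermOver Γ (r a)
  equiv : ∀ a : A, CongH H (r a) (.var a)
  expansive : ∀ a ∈ Γ, LeH (∅ : HypSet A) (.var a) (r a)
  preserves : ∀ L : Lang A, L ⊆ SPover Γ → cl H' L ⊆ SPover Γ
  hyps : ∀ p ∈ H, LeH H' (rTerm r p.1) (rTerm r p.2)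

end CKAH

namespace CKAH

/-! The heart of the matter is that contexts around a pomset `x` with at most one point can be
pulled back along subsumption: if `U ⊑ C[x]`, then `U = C'[x]` for some series-parallel context
`C'` with `C'[X] ⊑ C[X]` for all series-parallel `X`. This goes by induction on the subsumption:
since `x` has at most one point it cannot be cut by a decomposition of `C[x]`, so it can be traced
to one of the factors. The exception is an empty `x` in a parallel composition, which can end up
before or after all the factors.

So if a closure step of `H` puts `C[x]` into the closure because `C[⟦f⟧]` is contained in it,
then by induction so is `C'[⟦f⟧]`, and the same step applied in `C'` yields `U`. For `exch`, the
closure steps themselves include every instance of the exchange law in a context, so its closure is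
downward closed. -/

variable {A B : Type}

local infixr:70 " ⬝ " => Pomset.seq
local infixr:70 " ∥ " => Pomset.par
local infix:50 " ⊑ " => spSub

/-- The pomset represented by a labelled poset. -/
def Pomset.mk (u : LPoset A) : Pomset A := ⟦u⟧

theorem Pomset.exists_mk_eq (U : Pomset A) : ∃ u, mk u = U := Quotient.exists_rep U

/-! ### Embeddings and restrictions of labelled posets -/

namespace LPoset

/-- A label-preserving order embedding: it exhibits `u` as an induced sub-poset of `v`. -/
structure Embedding (u v : LPoset A) where
  toFun : u.carrier → v.carrier
  le_iff_le : ∀ {x y}, toFun x ≤ toFun y ↔ x ≤ y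
  lab_apply : ∀ x, v.lab (toFun x) = u.lab x

namespace Embedding

variable {u v w : LPoset A}

instance : CoeFun (Embedding u v) fun _ => u.carrier → v.carrier := ⟨toFun⟩

theorem injective (f : Embedding u v) : Function.Injective f :=
  (OrderEmbedding.ofMapLEIff f fun _ _ => f.le_iff_le).injective

theorem lt_iff_lt (f : Embedding u v) {x y : u.carrier} : f x < f y ↔ x < y := by
  simp only [lt_iff_le_not_ge, f.le_iff_le]

/-- Composition of embeddings. -/
def trans (f : Embedding u v) (g : Embedding v w) : Embedding u w :=
  ⟨g ∘ f, g.le_iff_le.trans f.le_iff_le, fun x => (g.lab_apply (f x)).trans (f.lab_apply x)⟩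

theorem compl_range_trans {u₁ u₂ : LPoset A} {f : Embedding u₁ v} {g : Embedding u₂ v}
    {k : Embedding v w} (h : IsCompl (Set.range f) (Set.range g)) (hk : Function.Bijective k) :
    (Set.range (f.trans k))ᶜ = Set.range (g.trans k) :=
  calc (Set.range (k ∘ f))ᶜ = (k '' Set.range f)ᶜ := by rw [Set.range_comp]
    _ = k '' Set.range g := by rw [← Set.image_compl_eq hk, h.compl_eq]
    _ = Set.range (k ∘ g) := (Set.range_comp k g).symm

/-- The left factor of a sequential composition, as an induced sub-poset. -/
def seqInl (u v : LPoset A) : Embedding u (u.seqL v) :=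
  ⟨Sum.inlₗ, Sum.Lex.inl_le_inl_iff, fun _ => rfl⟩

/-- The right factor of a sequential composition, as an induced sub-poset. -/
def seqInr (u v : LPoset A) : Embedding v (u.seqL v) :=
  ⟨Sum.inrₗ, Sum.Lex.inr_le_inr_iff, fun _ => rfl⟩

/-- The left factor of a parallel composition, as an induced sub-poset. -/
def parInl (u v : LPoset A) : Embedding u (u.parL v) :=
  ⟨Sum.inl, Sum.inl_le_inl_iff, fun _ => rfl⟩

/-- The right factor of a parallel composition, as an induced sub-poset. -/
def parInr (u v : LPoset A) : Embedding v (u.parL v) :=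
  ⟨Sum.inr, Sum.inr_le_inr_iff, fun _ => rfl⟩

theorem mk_eq_of_surjective (f : Embedding u v) (hf : Function.Surjective f) :
    Pomset.mk u = Pomset.mk v :=
  Quotient.sound
    ⟨RelIso.ofSurjective (OrderEmbedding.ofMapLEIff f fun _ _ => f.le_iff_le) hf, f.lab_apply⟩

theorem exists_bijective_of_mk_eq (h : Pomset.mk u = Pomset.mk v) :
    ∃ f : Embedding u v, Function.Bijective f :=
  let ⟨e, he⟩ := Quotient.exact h
  ⟨⟨e, e.le_iff_le, he⟩, e.bijective⟩

theorem mk_eq_seq (f : Embedding u w) (g : Embedding v w) (hlt : ∀ a b, f a < g b)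
    (hcover : ∀ z, (∃ a, f a = z) ∨ ∃ b, g b = z) : Pomset.mk w = Pomset.mk u ⬝ Pomset.mk v := by
  let k : Embedding (u.seqL v) w :=
    { toFun := fun x => Sum.elim f g (ofLex x)
      le_iff_le := by
        rintro (a | a) (b | b)
        · exact f.le_iff_le.trans Sum.Lex.inl_le_inl_iff.symm
        · exact iff_of_true (hlt a b).le (Sum.Lex.inl_le_inr a b)
        · exact iff_of_false (hlt b a).not_ge Sum.Lex.not_inr_le_inl
        · exact g.le_iff_le.trans Sum.Lex.inr_le_inr_iff.symm
      lab_apply := Sum.rec f.lab_apply g.lab_apply }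
  refine (k.mk_eq_of_surjective fun z => ?_).symm
  rcases hcover z with ⟨a, ha⟩ | ⟨b, hb⟩
  exacts [⟨Sum.inlₗ a, ha⟩, ⟨Sum.inrₗ b, hb⟩]

theorem mk_eq_par (f : Embedding u w) (g : Embedding v w)
    (hincomp : ∀ a b, IncompRel (· ≤ ·) (f a) (g b))
    (hcover : ∀ z, (∃ a, f a = z) ∨ ∃ b, g b = z) : Pomset.mk w = Pomset.mk u ∥ Pomset.mk v := by
  let k : Embedding (u.parL v) w :=
    { toFun := Sum.elim f g
      le_iff_le := by
        rintro (a | a) (b | b)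
        · exact f.le_iff_le.trans Sum.inl_le_inl_iff.symm
        · exact iff_of_false (hincomp a b).1 Sum.not_inl_le_inr
        · exact iff_of_false (hincomp b a).2 Sum.not_inr_le_inl
        · exact g.le_iff_le.trans Sum.inr_le_inr_iff.symm
      lab_apply := Sum.rec f.lab_apply g.lab_apply }
  refine (k.mk_eq_of_surjective fun z => ?_).symm
  rcases hcover z with ⟨a, ha⟩ | ⟨b, hb⟩
  exacts [⟨Sum.inl a, ha⟩, ⟨Sum.inr b, hb⟩]

end Embedding

/-- The sub-poset of `w` induced on the points of `s`. -/
noncomputable def restrictL (w : LPoset A) (s : Set w.carrier) : LPoset A where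
  carrier := s
  fin := Fintype.ofFinite s
  lab x := w.lab x

section Restrict

variable {u v w : LPoset A} {r s t : Set w.carrier}

/-- The inclusion of a restriction into a larger one. -/
def restrictIncl (h : s ⊆ t) : Embedding (w.restrictL s) (w.restrictL t) :=
  ⟨Set.inclusion h, Iff.rfl, fun _ => rfl⟩

/-- The restriction of an embedding to induced sub-posets of its source and target. -/
def Embedding.restrict (f : Embedding u w) {s : Set u.carrier} (h : Set.MapsTo f s t) :
    Embedding (u.restrictL s) (w.restrictL t) :=
  ⟨h.restrict f s t, f.le_iff_le, fun x => f.lab_apply x.1⟩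

theorem mk_restrictL_range (f : Embedding u w) :
    Pomset.mk (w.restrictL (Set.range f)) = Pomset.mk u :=
  .symm (Embedding.mk_eq_of_surjective
    (⟨Set.rangeFactorization f, f.le_iff_le, f.lab_apply⟩ : Embedding u (w.restrictL (Set.range f)))
    Set.rangeFactorization_surjective)

theorem mk_restrictL_univ : Pomset.mk (w.restrictL Set.univ) = Pomset.mk w :=
  Embedding.mk_eq_of_surjective ⟨Subtype.val, Iff.rfl, fun _ => rfl⟩ fun z => ⟨⟨z, trivial⟩, rfl⟩

theorem mk_restrictL_union_seq (h : ∀ a ∈ s, ∀ b ∈ t, a < b) :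
    Pomset.mk (w.restrictL (s ∪ t)) = Pomset.mk (w.restrictL s) ⬝ Pomset.mk (w.restrictL t) :=
  Embedding.mk_eq_seq (restrictIncl Set.subset_union_left) (restrictIncl Set.subset_union_right)
    (fun a b => h a.1 a.2 b.1 b.2)
    (fun z => z.2.imp (fun hz => ⟨⟨z.1, hz⟩, rfl⟩) fun hz => ⟨⟨z.1, hz⟩, rfl⟩)

theorem mk_restrictL_union_par (h : ∀ a ∈ s, ∀ b ∈ t, IncompRel (· ≤ ·) a b) :
    Pomset.mk (w.restrictL (s ∪ t)) = Pomset.mk (w.restrictL s) ∥ Pomset.mk (w.restrictL t) :=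
  Embedding.mk_eq_par (restrictIncl Set.subset_union_left) (restrictIncl Set.subset_union_right)
    (fun a b => h a.1 a.2 b.1 b.2)
    (fun z => z.2.imp (fun hz => ⟨⟨z.1, hz⟩, rfl⟩) fun hz => ⟨⟨z.1, hz⟩, rfl⟩)

theorem exists_restrictL_of_mk_eq_seq {U V : Pomset A} (h : Pomset.mk w = U ⬝ V) :
    ∃ s : Set w.carrier, (∀ a ∈ s, ∀ b ∈ sᶜ, a < b) ∧
      Pomset.mk (w.restrictL s) = U ∧ Pomset.mk (w.restrictL sᶜ) = V := by
  obtain ⟨u, rfl⟩ := U.exists_mk_eq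
  obtain ⟨v, rfl⟩ := V.exists_mk_eq
  obtain ⟨k, hk⟩ := Embedding.exists_bijective_of_mk_eq (u := u.seqL v) h.symm
  have hcompl := Embedding.compl_range_trans (f := .seqInl u v) (g := .seqInr u v)
    Set.isCompl_range_inl_range_inr hk
  refine ⟨_, ?_, mk_restrictL_range _, hcompl ▸ mk_restrictL_range _⟩
  rw [hcompl]
  rintro _ ⟨a, rfl⟩ _ ⟨b, rfl⟩
  exact k.lt_iff_lt.2 (Sum.Lex.inl_lt_inr a b)

theorem exists_restrictL_of_mk_eq_par {U V : Pomset A} (h : Pomset.mk w = U ∥ V) :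
    ∃ s : Set w.carrier, (∀ a ∈ s, ∀ b ∈ sᶜ, IncompRel (· ≤ ·) a b) ∧
      Pomset.mk (w.restrictL s) = U ∧ Pomset.mk (w.restrictL sᶜ) = V := by
  obtain ⟨u, rfl⟩ := U.exists_mk_eq
  obtain ⟨v, rfl⟩ := V.exists_mk_eq
  obtain ⟨k, hk⟩ := Embedding.exists_bijective_of_mk_eq (u := u.parL v) h.symm
  have hcompl := Embedding.compl_range_trans (f := .parInl u v) (g := .parInr u v)
    Set.isCompl_range_inl_range_inr hk
  refine ⟨_, ?_, mk_restrictL_range _, hcompl ▸ mk_restrictL_range _⟩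
  rw [hcompl]
  rintro _ ⟨a, rfl⟩ _ ⟨b, rfl⟩
  exact ⟨mt k.le_iff_le.1 Sum.not_inl_le_inr, mt k.le_iff_le.1 Sum.not_inr_le_inl⟩

theorem exists_mk_restrictL_eq_seq (hs : ∀ a ∈ s, ∀ b ∈ sᶜ, a < b) (ht : ∀ a ∈ t, ∀ b ∈ tᶜ, a < b)
    (hst : s ⊆ t) : ∃ W : Pomset A, Pomset.mk (w.restrictL t) = Pomset.mk (w.restrictL s) ⬝ W ∧
      Pomset.mk (w.restrictL sᶜ) = W ⬝ Pomset.mk (w.restrictL tᶜ) := by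
  have hcompl : t \ s ∪ tᶜ = sᶜ := by
    rw [Set.sdiff_eq, Set.inter_union_distrib_right, Set.union_compl_self, Set.univ_inter,
      Set.union_eq_left.2 (Set.compl_subset_compl.2 hst)]
  refine ⟨Pomset.mk (w.restrictL (t \ s)), ?_, ?_⟩
  · rw [← mk_restrictL_union_seq fun a ha b hb => hs a ha b hb.2, Set.union_sdiff_cancel hst]
  · rw [← mk_restrictL_union_seq fun a ha b hb => ht a ha.1 b hb, hcompl]

theorem mk_eq_empty_iff : Pomset.mk w = Pomset.empty A ↔ IsEmpty w.carrier := by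
  refine ⟨fun h => ?_, fun h => ?_⟩
  · obtain ⟨f, -⟩ := Embedding.exists_bijective_of_mk_eq h
    exact Function.isEmpty (β := Fin 0) f
  · exact Embedding.mk_eq_of_surjective ⟨isEmptyElim, @fun x => h.elim x, isEmptyElim⟩
      fun z => Fin.elim0 z

theorem mk_restrictL_eq_empty_iff : Pomset.mk (w.restrictL s) = Pomset.empty A ↔ s = ∅ :=
  mk_eq_empty_iff.trans Set.isEmpty_coe_sort

end Restrict
end LPoset

/-! ### The monoid laws and unique decomposition -/

namespace Pomset

open LPoset

theorem seq_assoc (U V W : Pomset A) : (U ⬝ V) ⬝ W = U ⬝ V ⬝ W := by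
  obtain ⟨u, rfl⟩ := U.exists_mk_eq
  obtain ⟨v, rfl⟩ := V.exists_mk_eq
  obtain ⟨w, rfl⟩ := W.exists_mk_eq
  refine Quotient.sound ⟨OrderIso.sumLexAssoc _ _ _, ?_⟩
  rintro ((x | x) | x) <;> rfl

theorem par_assoc (U V W : Pomset A) : (U ∥ V) ∥ W = U ∥ V ∥ W := by
  obtain ⟨u, rfl⟩ := U.exists_mk_eq
  obtain ⟨v, rfl⟩ := V.exists_mk_eq
  obtain ⟨w, rfl⟩ := W.exists_mk_eq
  refine Quotient.sound ⟨OrderIso.sumAssoc _ _ _, ?_⟩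
  rintro ((x | x) | x) <;> rfl

theorem par_comm (U V : Pomset A) : U ∥ V = V ∥ U := by
  obtain ⟨u, rfl⟩ := U.exists_mk_eq
  obtain ⟨v, rfl⟩ := V.exists_mk_eq
  refine Quotient.sound ⟨OrderIso.sumComm _ _, ?_⟩
  rintro (x | x) <;> rfl

theorem par_par_par_comm (U V W X : Pomset A) : (U ∥ V) ∥ W ∥ X = (U ∥ W) ∥ V ∥ X := by
  rw [par_assoc, ← par_assoc V, par_comm V W, par_assoc W, ← par_assoc U]

theorem seq_empty (U : Pomset A) : U ⬝ empty A = U := by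
  obtain ⟨u, rfl⟩ := U.exists_mk_eq
  refine (Embedding.mk_eq_of_surjective (Embedding.seqInl u (emptyL A)) ?_).symm
  rintro (x | x)
  exacts [⟨x, rfl⟩, Fin.elim0 x]

theorem empty_seq (U : Pomset A) : empty A ⬝ U = U := by
  obtain ⟨u, rfl⟩ := U.exists_mk_eq
  refine (Embedding.mk_eq_of_surjective (Embedding.seqInr (emptyL A) u) ?_).symm
  rintro (x | x)
  exacts [Fin.elim0 x, ⟨x, rfl⟩]

theorem par_empty (U : Pomset A) : U ∥ empty A = U := by
  obtain ⟨u, rfl⟩ := U.exists_mk_eq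
  refine (Embedding.mk_eq_of_surjective (Embedding.parInl u (emptyL A)) ?_).symm
  rintro (x | x)
  exacts [⟨x, rfl⟩, Fin.elim0 x]

theorem empty_par (U : Pomset A) : empty A ∥ U = U := by rw [par_comm, par_empty]

theorem seq_eq_empty_iff {U V : Pomset A} : U ⬝ V = empty A ↔ U = empty A ∧ V = empty A := by
  obtain ⟨u, rfl⟩ := U.exists_mk_eq
  obtain ⟨v, rfl⟩ := V.exists_mk_eq
  simp only [mk_eq_empty_iff]
  exact mk_eq_empty_iff.trans isEmpty_sum

theorem par_eq_empty_iff {U V : Pomset A} : U ∥ V = empty A ↔ U = empty A ∧ V = empty A := by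
  obtain ⟨u, rfl⟩ := U.exists_mk_eq
  obtain ⟨v, rfl⟩ := V.exists_mk_eq
  simp only [mk_eq_empty_iff]
  exact mk_eq_empty_iff.trans isEmpty_sum

theorem exists_of_seq_eq_seq {U V U' V' : Pomset A} (h : U ⬝ V = U' ⬝ V') :
    (∃ W, U' = U ⬝ W ∧ V = W ⬝ V') ∨ ∃ W, U = U' ⬝ W ∧ V' = W ⬝ V := by
  obtain ⟨w, hw⟩ := exists_mk_eq (U ⬝ V)
  obtain ⟨s, hs, rfl, rfl⟩ := exists_restrictL_of_mk_eq_seq hw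
  obtain ⟨t, ht, rfl, rfl⟩ := exists_restrictL_of_mk_eq_seq (hw.trans h)
  by_cases hst : s ⊆ t
  · exact .inl (exists_mk_restrictL_eq_seq hs ht hst)
  · obtain ⟨a, has, hat⟩ := Set.not_subset.1 hst
    refine .inr (exists_mk_restrictL_eq_seq ht hs fun b hb => by_contra fun hbs => ?_)
    exact lt_asymm (hs a has b hbs) (ht b hb a hat)

theorem exists_of_par_eq_par {P Q V W : Pomset A} (h : P ∥ Q = V ∥ W) :
    ∃ P₁ P₂ Q₁ Q₂ : Pomset A, P = P₁ ∥ P₂ ∧ Q = Q₁ ∥ Q₂ ∧ V = P₁ ∥ Q₁ ∧ W = P₂ ∥ Q₂ := by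
  obtain ⟨w, hw⟩ := exists_mk_eq (P ∥ Q)
  obtain ⟨s, hs, rfl, rfl⟩ := exists_restrictL_of_mk_eq_par hw
  obtain ⟨t, ht, rfl, rfl⟩ := exists_restrictL_of_mk_eq_par (hw.trans h)
  have split_by_t (r : Set w.carrier) : mk (w.restrictL r) =
      mk (w.restrictL (r ∩ t)) ∥ mk (w.restrictL (r ∩ tᶜ)) := by
    rw [← mk_restrictL_union_par fun a ha b hb => ht a ha.2 b hb.2, Set.inter_union_compl]
  have split_by_s (r : Set w.carrier) : mk (w.restrictL r) =
      mk (w.restrictL (s ∩ r)) ∥ mk (w.restrictL (sᶜ ∩ r)) := by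
    rw [← mk_restrictL_union_par fun a ha b hb => hs a ha.1 b hb.1, ← Set.union_inter_distrib_right,
      Set.union_compl_self, Set.univ_inter]
  exact ⟨_, _, _, _, split_by_t s, split_by_t sᶜ, split_by_s t, split_by_s tᶜ⟩

theorem eq_empty_of_par_eq_seq {P Q V W : Pomset A} (h : P ∥ Q = V ⬝ W) :
    (P = empty A ∨ Q = empty A) ∨ V = empty A ∨ W = empty A := by
  obtain ⟨w, hw⟩ := exists_mk_eq (P ∥ Q)
  obtain ⟨s, hs, rfl, rfl⟩ := exists_restrictL_of_mk_eq_par hw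
  obtain ⟨t, ht, rfl, rfl⟩ := exists_restrictL_of_mk_eq_seq (hw.trans h)
  simp only [mk_restrictL_eq_empty_iff]
  by_contra! hne
  obtain ⟨⟨⟨p, hp⟩, q, hq⟩, ⟨a, ha⟩, b, hb⟩ := hne
  -- `a < b` lie on one side of the parallel cut; a point `z` on the other side is
  -- comparable to `a` or to `b`.
  have not_separated (z : w.carrier) (hza : ¬ a ≤ z) (hzb : ¬ z ≤ b) : False := by
    by_cases hz : z ∈ t
    · exact hzb (ht z hz b hb).le
    · exact hza (ht a ha z hz).le
  have hab : a ≤ b := (ht a ha b hb).le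
  by_cases has : a ∈ s
  · have hbs : b ∈ s := by_contra fun hbs => (hs a has b hbs).1 hab
    exact not_separated q (hs a has q hq).1 (hs b hbs q hq).2
  · have hbs : b ∉ s := fun hbs => (hs b hbs a has).2 hab
    exact not_separated p (hs p hp a has).2 (hs p hp b hbs).1

/-! ### Series-parallel pomsets -/

/-- A pomset with at most one point. -/
def IsSubsingleton (U : Pomset A) : Prop := U = empty A ∨ ∃ a, U = single a

theorem isSubsingleton_mk_iff {w : LPoset A} :
    (mk w).IsSubsingleton ↔ Subsingleton w.carrier := by
  constructor
  · rintro (h | ⟨a, h⟩) <;> obtain ⟨f, -⟩ := Embedding.exists_bijective_of_mk_eq h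
    · exact @Function.Injective.subsingleton _ (Fin 0) f f.injective _
    · exact @Function.Injective.subsingleton _ PUnit f f.injective _
  · intro h
    rcases isEmpty_or_nonempty w.carrier with hw | ⟨⟨x⟩⟩
    · exact .inl (mk_eq_empty_iff.2 hw)
    · exact .inr ⟨w.lab x, .symm <| Embedding.mk_eq_of_surjective
        ⟨fun _ => x, iff_of_true le_rfl le_rfl, fun _ => rfl⟩ fun z => ⟨⟨⟩, h.elim x z⟩⟩

namespace IsSubsingleton

variable {U V : Pomset A}

theorem isSP (h : U.IsSubsingleton) : U.IsSP := by
  rcases h with rfl | ⟨a, rfl⟩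
  exacts [.empty, .single a]

theorem of_embedding {u w : LPoset A} (h : (mk w).IsSubsingleton) (f : Embedding u w) :
    (mk u).IsSubsingleton :=
  have := isSubsingleton_mk_iff.1 h
  isSubsingleton_mk_iff.2 f.injective.subsingleton

theorem eq_empty_of_seq (h : (U ⬝ V).IsSubsingleton) : U = empty A ∨ V = empty A := by
  obtain ⟨u, rfl⟩ := U.exists_mk_eq
  obtain ⟨v, rfl⟩ := V.exists_mk_eq
  have := isSubsingleton_mk_iff.1 (show (mk (u.seqL v)).IsSubsingleton from h)
  rw [mk_eq_empty_iff, mk_eq_empty_iff, ← not_nonempty_iff, ← not_nonempty_iff, ← not_and_or]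
  rintro ⟨⟨a⟩, ⟨b⟩⟩
  exact Sum.inl_ne_inr (this.elim (Sum.inlₗ a) (Sum.inrₗ b))

theorem eq_empty_of_par (h : (U ∥ V).IsSubsingleton) : U = empty A ∨ V = empty A := by
  obtain ⟨u, rfl⟩ := U.exists_mk_eq
  obtain ⟨v, rfl⟩ := V.exists_mk_eq
  have := isSubsingleton_mk_iff.1 (show (mk (u.parL v)).IsSubsingleton from h)
  rw [mk_eq_empty_iff, mk_eq_empty_iff, ← not_nonempty_iff, ← not_nonempty_iff, ← not_and_or]
  rintro ⟨⟨a⟩, ⟨b⟩⟩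
  exact Sum.inl_ne_inr (this.elim (Sum.inl a) (Sum.inr b))

end IsSubsingleton

namespace IsSP

theorem of_embedding {u w : LPoset A} (h : (mk w).IsSP) (f : Embedding u w) : (mk u).IsSP := by
  obtain ⟨W, hw⟩ : ∃ W, mk w = W := ⟨_, rfl⟩
  rw [hw] at h
  induction h generalizing u w with
  | empty => exact (IsSubsingleton.of_embedding (.inl hw) f).isSP
  | single a => exact (IsSubsingleton.of_embedding (.inr ⟨a, hw⟩) f).isSP
  | seq _ _ ihU ihV =>
    obtain ⟨t, ht, hU, hV⟩ := exists_restrictL_of_mk_eq_seq hw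
    rw [← mk_restrictL_univ, ← Set.union_compl_self (f ⁻¹' t),
      mk_restrictL_union_seq (s := f ⁻¹' t) (t := (f ⁻¹' t)ᶜ)
        fun a ha b hb => f.lt_iff_lt.1 (ht (f a) ha (f b) hb)]
    exact .seq (ihU (f.restrict (Set.mapsTo_preimage f t)) hU)
      (ihV (f.restrict (Set.mapsTo_preimage f tᶜ)) hV)
  | par _ _ ihU ihV =>
    obtain ⟨t, ht, hU, hV⟩ := exists_restrictL_of_mk_eq_par hw
    rw [← mk_restrictL_univ, ← Set.union_compl_self (f ⁻¹' t),
      mk_restrictL_union_par (s := f ⁻¹' t) (t := (f ⁻¹' t)ᶜ) fun a ha b hb =>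
        (ht (f a) ha (f b) hb).imp (mt f.le_iff_le.2) (mt f.le_iff_le.2)]
    exact .par (ihU (f.restrict (Set.mapsTo_preimage f t)) hU)
      (ihV (f.restrict (Set.mapsTo_preimage f tᶜ)) hV)

theorem of_seq {U V : Pomset A} (h : (U ⬝ V).IsSP) : U.IsSP ∧ V.IsSP := by
  obtain ⟨u, rfl⟩ := U.exists_mk_eq
  obtain ⟨v, rfl⟩ := V.exists_mk_eq
  exact ⟨of_embedding h (.seqInl u v), of_embedding h (.seqInr u v)⟩

theorem of_par {U V : Pomset A} (h : (U ∥ V).IsSP) : U.IsSP ∧ V.IsSP := by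
  obtain ⟨u, rfl⟩ := U.exists_mk_eq
  obtain ⟨v, rfl⟩ := V.exists_mk_eq
  exact ⟨of_embedding h (.parInl u v), of_embedding h (.parInr u v)⟩

end IsSP
end Pomset

/-! ### Subsumption -/

namespace spSub

open Pomset

variable {U V W : Pomset A}

theorem isSP (h : U ⊑ V) : U.IsSP ∧ V.IsSP := by
  induction h with
  | refl h => exact ⟨h, h⟩
  | trans _ _ ihU ihV => exact ⟨ihU.1, ihV.2⟩
  | seqCong _ _ ih ih' => exact ⟨.seq ih.1 ih'.1, .seq ih.2 ih'.2⟩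
  | parCong _ _ ih ih' => exact ⟨.par ih.1 ih'.1, .par ih.2 ih'.2⟩
  | exch hU hV hW hX => exact ⟨.seq (.par hU hV) (.par hW hX), .par (.seq hU hW) (.seq hV hX)⟩

theorem par_seq_right (hU : U.IsSP) (hV : V.IsSP) (hW : W.IsSP) :
    (U ∥ V) ⬝ W ⊑ U ∥ (V ⬝ W) := by
  simpa only [empty_par, seq_empty] using exch hU hV .empty hW

theorem par_seq_left (hU : U.IsSP) (hV : V.IsSP) (hW : W.IsSP) :
    (U ∥ V) ⬝ W ⊑ (U ⬝ W) ∥ V := by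
  simpa only [par_empty, seq_empty] using exch hU hV hW .empty

theorem seq_par_right (hU : U.IsSP) (hV : V.IsSP) (hW : W.IsSP) :
    U ⬝ (V ∥ W) ⊑ V ∥ (U ⬝ W) := by
  simpa only [empty_par, empty_seq] using exch .empty hU hV hW

end spSub

/-! ### Context functions -/

/-- The functions `X ↦ C[X]` given by series-parallel contexts `C`, generated inductively so that
contexts can be decomposed without mentioning the label `*`. -/
inductive IsCtxFun : (Pomset A → Pomset A) → Prop
  | hole : IsCtxFun fun X => X
  | seqL {D f} : D.IsSP → IsCtxFun f → IsCtxFun fun X => D ⬝ f X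
  | seqR {D f} : D.IsSP → IsCtxFun f → IsCtxFun fun X => f X ⬝ D
  | par {D f} : D.IsSP → IsCtxFun f → IsCtxFun fun X => D ∥ f X

/-- Pointwise subsumption of functions on series-parallel pomsets. -/
def CtxLE (f g : Pomset A → Pomset A) : Prop := ∀ X, X.IsSP → f X ⊑ g X

local infix:50 " ≼ " => CtxLE

section CtxFun

open Pomset

variable {f g : Pomset A → Pomset A} {x U V W X : Pomset A}

namespace IsCtxFun

theorem comp (hf : IsCtxFun f) (hg : IsCtxFun g) : IsCtxFun fun X => f (g X) := by
  induction hf with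
  | hole => exact hg
  | seqL hD _ ih => exact .seqL hD ih
  | seqR hD _ ih => exact .seqR hD ih
  | par hD _ ih => exact .par hD ih

theorem parR (hV : V.IsSP) (hf : IsCtxFun f) : IsCtxFun fun X => f X ∥ V := by
  simpa only [par_comm V] using hf.par hV

theorem isSP (hf : IsCtxFun f) (hX : X.IsSP) : (f X).IsSP := by
  induction hf with
  | hole => exact hX
  | seqL hD _ ih => exact .seq hD ih
  | seqR hD _ ih => exact .seq ih hD
  | par hD _ ih => exact .par hD ih

theorem eq_empty_and_eq_id (hf : IsCtxFun f) (h : f x = empty A) :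
    x = empty A ∧ f = fun X => X := by
  induction hf with
  | hole => exact ⟨h, rfl⟩
  | seqL _ _ ih =>
    obtain ⟨rfl, hfx⟩ := seq_eq_empty_iff.1 h
    obtain ⟨rfl, rfl⟩ := ih hfx
    exact ⟨rfl, funext empty_seq⟩
  | seqR _ _ ih =>
    obtain ⟨hfx, rfl⟩ := seq_eq_empty_iff.1 h
    obtain ⟨rfl, rfl⟩ := ih hfx
    exact ⟨rfl, funext seq_empty⟩
  | par _ _ ih =>
    obtain ⟨rfl, hfx⟩ := par_eq_empty_iff.1 h
    obtain ⟨rfl, rfl⟩ := ih hfx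
    exact ⟨rfl, funext empty_par⟩

theorem ctxLE_refl (hf : IsCtxFun f) : f ≼ f := fun _ hX => .refl (hf.isSP hX)

end IsCtxFun

theorem CtxLE.trans {k : Pomset A → Pomset A} (hfg : f ≼ g) (hgk : g ≼ k) : f ≼ k :=
  fun X hX => (hfg X hX).trans (hgk X hX)

/-! ### Splitting a context along a composition -/

/-- If `f x = V ⬝ W`, the argument `x` lies in one of the two factors, up to lowering `f`
in the order `≼`. -/
inductive SeqSplit (x : Pomset A) (f : Pomset A → Pomset A) (V W : Pomset A) : Prop
  | left {g : Pomset A → Pomset A} : IsCtxFun g → g x = V → (fun X => g X ⬝ W) ≼ f →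
      SeqSplit x f V W
  | right {g : Pomset A → Pomset A} : IsCtxFun g → g x = W → (fun X => V ⬝ g X) ≼ f →
      SeqSplit x f V W

theorem SeqSplit.of_empty (hf : IsCtxFun f) (h : f x = V ⬝ W) (hVW : V = empty A ∨ W = empty A) :
    SeqSplit x f V W := by
  rcases hVW with rfl | rfl
  · exact .right hf (by rw [h, empty_seq]) (by simpa only [empty_seq] using hf.ctxLE_refl)
  · exact .left hf (by rw [h, seq_empty]) (by simpa only [seq_empty] using hf.ctxLE_refl)

theorem IsCtxFun.seqSplit (hx : x.IsSubsingleton) (hf : IsCtxFun f) (h : f x = V ⬝ W) :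
    SeqSplit x f V W := by
  induction hf generalizing V W with
  | hole =>
    subst h
    exact .of_empty .hole rfl hx.eq_empty_of_seq
  | @seqL D f hD hf ih =>
    rcases exists_of_seq_eq_seq h with ⟨Y, rfl, hfx⟩ | ⟨Y, rfl, rfl⟩
    · rcases ih hfx with ⟨hg, rfl, hle⟩ | ⟨hg, rfl, hle⟩
      · refine .left (hg.seqL hD) rfl fun X hX => ?_
        simp only [Pomset.seq_assoc]
        exact .seqCong (.refl hD) (hle X hX)
      · refine .right hg rfl fun X hX => ?_
        simp only [Pomset.seq_assoc]
        exact .seqCong (.refl hD) (hle X hX)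
    · refine .right (hf.seqL hD.of_seq.2) rfl ?_
      simpa only [Pomset.seq_assoc] using (hf.seqL hD).ctxLE_refl
  | @seqR D f hD hf ih =>
    rcases exists_of_seq_eq_seq h with ⟨Y, rfl, rfl⟩ | ⟨Y, hfx, rfl⟩
    · refine .left (hf.seqR hD.of_seq.1) rfl ?_
      simpa only [Pomset.seq_assoc] using (hf.seqR hD).ctxLE_refl
    · rcases ih hfx with ⟨hg, rfl, hle⟩ | ⟨hg, rfl, hle⟩
      · refine .left hg rfl fun X hX => ?_
        simp only [← Pomset.seq_assoc]
        exact .seqCong (hle X hX) (.refl hD)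
      · refine .right (hg.seqR hD) rfl fun X hX => ?_
        simp only [← Pomset.seq_assoc]
        exact .seqCong (hle X hX) (.refl hD)
  | @par D f hD hf ih =>
    rcases eq_empty_of_par_eq_seq h with (rfl | hfx) | hVW
    · simp only [empty_par] at h ⊢
      exact ih h
    · obtain rfl : D = V ⬝ W := by simpa only [hfx, par_empty] using h
      refine .left (hf.par hD.of_seq.1) (by rw [hfx, par_empty]) fun X hX => ?_
      exact .par_seq_left hD.of_seq.1 (hf.isSP hX) hD.of_seq.2
    · exact .of_empty (hf.par hD) h hVW

/-- If `f x = V ∥ W`, the argument `x` lies in one of the two factors, or it is empty and can be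
moved before or after both of them, up to lowering `f` in the order `≼`. -/
inductive ParSplit (x : Pomset A) (f : Pomset A → Pomset A) (V W : Pomset A) : Prop
  | left {g : Pomset A → Pomset A} : IsCtxFun g → g x = V → (fun X => g X ∥ W) ≼ f →
      ParSplit x f V W
  | right {g : Pomset A → Pomset A} : IsCtxFun g → g x = W → (fun X => V ∥ g X) ≼ f →
      ParSplit x f V W
  | before : x = empty A → (fun X => X ⬝ (V ∥ W)) ≼ f → ParSplit x f V W
  | after : x = empty A → (fun X => (V ∥ W) ⬝ X) ≼ f → ParSplit x f V W

theorem ParSplit.of_empty (hf : IsCtxFun f) (h : f x = V ∥ W) (hVW : V = empty A ∨ W = empty A) :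
    ParSplit x f V W := by
  rcases hVW with rfl | rfl
  · exact .right hf (by rw [h, empty_par]) (by simpa only [empty_par] using hf.ctxLE_refl)
  · exact .left hf (by rw [h, par_empty]) (by simpa only [par_empty] using hf.ctxLE_refl)

theorem ParSplit.par {V' W' : Pomset A} (h : ParSplit x f V W) (hV : V.IsSP) (hW : W.IsSP)
    (hV' : V'.IsSP) (hW' : W'.IsSP) :
    ParSplit x (fun X => (V' ∥ W') ∥ f X) (V' ∥ V) (W' ∥ W) := by
  have hD : (V' ∥ W').IsSP := .par hV' hW'
  rcases h with ⟨hg, rfl, hle⟩ | ⟨hg, rfl, hle⟩ | ⟨rfl, hle⟩ | ⟨rfl, hle⟩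
  · refine .left (hg.par hV') rfl fun X hX => ?_
    beta_reduce
    rw [par_par_par_comm]
    exact .parCong (.refl hD) (hle X hX)
  · refine .right (hg.par hW') rfl fun X hX => ?_
    beta_reduce
    rw [par_par_par_comm]
    exact .parCong (.refl hD) (hle X hX)
  · refine .before rfl fun X hX => ?_
    beta_reduce
    rw [par_par_par_comm]
    exact (spSub.seq_par_right hX hD (.par hV hW)).trans (.parCong (.refl hD) (hle X hX))
  · refine .after rfl fun X hX => ?_
    beta_reduce
    rw [par_par_par_comm]
    exact (spSub.par_seq_right hD (.par hV hW) hX).trans (.parCong (.refl hD) (hle X hX))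

theorem IsCtxFun.parSplit (hx : x.IsSubsingleton) (hf : IsCtxFun f) (h : f x = V ∥ W) :
    ParSplit x f V W := by
  induction hf generalizing V W with
  | hole =>
    subst h
    exact .of_empty .hole rfl hx.eq_empty_of_par
  | @seqL D f hD hf ih =>
    rcases eq_empty_of_par_eq_seq h.symm with hVW | rfl | hfx
    · exact .of_empty (hf.seqL hD) h hVW
    · simp only [empty_seq] at h ⊢
      exact ih h
    · obtain rfl : D = V ∥ W := by simpa only [hfx, seq_empty] using h
      obtain ⟨rfl, rfl⟩ := hf.eq_empty_and_eq_id hfx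
      exact .after rfl (hf.seqL hD).ctxLE_refl
  | @seqR D f hD hf ih =>
    rcases eq_empty_of_par_eq_seq h.symm with hVW | hfx | rfl
    · exact .of_empty (hf.seqR hD) h hVW
    · obtain rfl : D = V ∥ W := by simpa only [hfx, empty_seq] using h
      obtain ⟨rfl, rfl⟩ := hf.eq_empty_and_eq_id hfx
      exact .before rfl (hf.seqR hD).ctxLE_refl
    · simp only [seq_empty] at h ⊢
      exact ih h
  | par hD hf ih =>
    obtain ⟨V', W', V'', W'', rfl, hfx, rfl, rfl⟩ := exists_of_par_eq_par h
    have hfxSP := hfx ▸ hf.isSP hx.isSP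
    exact (ih hfx).par hfxSP.of_par.1 hfxSP.of_par.2 hD.of_par.1 hD.of_par.2

/-! ### Pulling a context back along a subsumption -/

/-- `U` is the value at `x` of a context function below `f`. -/
def HasCtxBelow (x : Pomset A) (f : Pomset A → Pomset A) (U : Pomset A) : Prop :=
  ∃ g, IsCtxFun g ∧ g x = U ∧ g ≼ f

namespace HasCtxBelow

variable {V' : Pomset A}

theorem mono (h : HasCtxBelow x f U) (hfg : f ≼ g) : HasCtxBelow x g U :=
  let ⟨k, hk, hkx, hkf⟩ := h
  ⟨k, hk, hkx, hkf.trans hfg⟩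

theorem seq_left (h : HasCtxBelow x f U) (hV : V ⊑ V') : HasCtxBelow x (f · ⬝ V') (U ⬝ V) :=
  let ⟨_, hk, hkx, hkf⟩ := h
  ⟨_, hk.seqR hV.isSP.1, congrArg (· ⬝ V) hkx, fun X hX => .seqCong (hkf X hX) hV⟩

theorem seq_right (hV : V ⊑ V') (h : HasCtxBelow x f U) : HasCtxBelow x (V' ⬝ f ·) (V ⬝ U) :=
  let ⟨_, hk, hkx, hkf⟩ := h
  ⟨_, hk.seqL hV.isSP.1, congrArg (V ⬝ ·) hkx, fun X hX => .seqCong hV (hkf X hX)⟩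

theorem par_left (h : HasCtxBelow x f U) (hV : V ⊑ V') : HasCtxBelow x (f · ∥ V') (U ∥ V) :=
  let ⟨_, hk, hkx, hkf⟩ := h
  ⟨_, hk.parR hV.isSP.1, congrArg (· ∥ V) hkx, fun X hX => .parCong (hkf X hX) hV⟩

theorem par_right (hV : V ⊑ V') (h : HasCtxBelow x f U) : HasCtxBelow x (V' ∥ f ·) (V ∥ U) :=
  let ⟨_, hk, hkx, hkf⟩ := h
  ⟨_, hk.par hV.isSP.1, congrArg (V ∥ ·) hkx, fun X hX => .parCong hV (hkf X hX)⟩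

theorem before (hU : U ⊑ V) (hf : (· ⬝ V) ≼ f) : HasCtxBelow (empty A) f U :=
  ⟨_, .seqR hU.isSP.1 .hole, empty_seq U, fun X hX => (spSub.seqCong (.refl hX) hU).trans (hf X hX)⟩

theorem after (hU : U ⊑ V) (hf : (V ⬝ ·) ≼ f) : HasCtxBelow (empty A) f U :=
  ⟨_, .seqL hU.isSP.1 .hole, seq_empty U, fun X hX => (spSub.seqCong hU (.refl hX)).trans (hf X hX)⟩

theorem of_exch (hx : x.IsSubsingleton) (hU : U.IsSP) (hV : V.IsSP) (hW : W.IsSP) (hX : X.IsSP)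
    (hg : IsCtxFun g) (hgx : g x = U ⬝ W) :
    HasCtxBelow x (fun Y => g Y ∥ (V ⬝ X)) ((U ∥ V) ⬝ (W ∥ X)) := by
  have hVX : V ⬝ X ⊑ V ⬝ X := .refl (.seq hV hX)
  rcases hg.seqSplit hx hgx with ⟨hk, rfl, hle⟩ | ⟨hk, rfl, hle⟩
  · exact ⟨_, (hk.parR hV).seqR (.par hW hX), rfl, fun Y hY =>
      (spSub.exch (hk.isSP hY) hV hW hX).trans (.parCong (hle Y hY) hVX)⟩
  · exact ⟨_, (hk.parR hX).seqL (.par hU hV), rfl, fun Y hY =>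
      (spSub.exch hU hV (hk.isSP hY) hX).trans (.parCong (hle Y hY) hVX)⟩

end HasCtxBelow

theorem IsCtxFun.hasCtxBelow_of_spSub (hx : x.IsSubsingleton) (hUV : U ⊑ V) (hf : IsCtxFun f)
    (hfx : f x = V) : HasCtxBelow x f U := by
  induction hUV generalizing f with
  | refl => exact ⟨f, hf, hfx, hf.ctxLE_refl⟩
  | trans _ _ ihU ihV =>
    obtain ⟨g, hg, hgx, hle⟩ := ihV hf hfx
    exact (ihU hg hgx).mono hle
  | seqCong hU hU' ihU ihU' =>
    rcases hf.seqSplit hx hfx with ⟨hg, hgx, hle⟩ | ⟨hg, hgx, hle⟩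
    · exact ((ihU hg hgx).seq_left hU').mono hle
    · exact ((ihU' hg hgx).seq_right hU).mono hle
  | parCong hU hU' ihU ihU' =>
    rcases hf.parSplit hx hfx with ⟨hg, hgx, hle⟩ | ⟨hg, hgx, hle⟩ | ⟨rfl, hle⟩ | ⟨rfl, hle⟩
    · exact ((ihU hg hgx).par_left hU').mono hle
    · exact ((ihU' hg hgx).par_right hU).mono hle
    · exact .before (.parCong hU hU') hle
    · exact .after (.parCong hU hU') hle
  | exch hU hV hW hX =>
    rcases hf.parSplit hx hfx with ⟨hg, hgx, hle⟩ | ⟨hg, hgx, hle⟩ | ⟨rfl, hle⟩ | ⟨rfl, hle⟩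
    · exact (HasCtxBelow.of_exch hx hU hV hW hX hg hgx).mono hle
    · refine .mono ?_ hle
      simpa only [par_comm] using HasCtxBelow.of_exch hx hV hU hX hW hg hgx
    · exact .before (.exch hU hV hW hX) hle
    · exact .after (.exch hU hV hW hX) hle

end CtxFun

/-! ### Insertion into contexts -/

namespace LPoset

/-- The node `s` is the unique `*`-labelled node of `c`. -/
def IsStar (c : LPoset (Option A)) (s : c.carrier) : Prop :=
  c.lab s = none ∧ ∀ y, c.lab y = none → y = s

variable {c d : LPoset (Option A)} {u x : LPoset A} {s : c.carrier}

namespace IsStar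

theorem uniqueStarL (hs : c.IsStar s) : c.uniqueStarL := ⟨s, hs⟩

theorem inl_le_inr_iff (hs : c.IsStar s) {p : {p // c.lab p ≠ none}} {a : x.carrier} :
    (show (c.insL x).carrier from .inl p) ≤ .inr a ↔ p.1 ≤ s :=
  ⟨fun ⟨_, t, ht, hpt⟩ => hs.2 t ht ▸ hpt, fun hps => ⟨hs.uniqueStarL, s, hs.1, hps⟩⟩

theorem inr_le_inl_iff (hs : c.IsStar s) {p : {p // c.lab p ≠ none}} {a : x.carrier} :
    (show (c.insL x).carrier from .inr a) ≤ .inl p ↔ s ≤ p.1 :=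
  ⟨fun ⟨_, t, ht, htp⟩ => hs.2 t ht ▸ htp, fun hsp => ⟨hs.uniqueStarL, s, hs.1, hsp⟩⟩

theorem of_embedding (hs : c.IsStar s) (f : Embedding c d) (g : Embedding (u.mapL some) d)
    (hcover : ∀ z, (∃ a, f a = z) ∨ ∃ b, g b = z) : d.IsStar (f s) := by
  refine ⟨(f.lab_apply s).trans hs.1, fun z hz => ?_⟩
  rcases hcover z with ⟨a, rfl⟩ | ⟨b, rfl⟩
  · exact congrArg f (hs.2 a ((f.lab_apply a).symm.trans hz))
  · exact absurd ((g.lab_apply b).symm.trans hz) (Option.some_ne_none _)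

end IsStar

/-- The map `C[X] → C` collapsing the inserted points to the node `s`. -/
def insProj (s : c.carrier) : (c.insL x).carrier → c.carrier := Sum.elim Subtype.val fun _ => s

theorem insProj_mono (hs : c.IsStar s) {z z' : (c.insL x).carrier} (h : z ≤ z') :
    insProj s z ≤ insProj s z' := by
  rcases z with p | a <;> rcases z' with q | b
  exacts [h, hs.inl_le_inr_iff.1 h, hs.inr_le_inl_iff.1 h, le_rfl]

theorem lt_of_insProj_lt (hs : c.IsStar s) {z z' : (c.insL x).carrier}
    (h : insProj s z < insProj s z') : z < z' := by
  refine lt_of_le_not_ge ?_ fun h' => h.not_ge (insProj_mono hs h')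
  rcases z with p | a <;> rcases z' with q | b
  exacts [h.le, hs.inl_le_inr_iff.2 h.le, hs.inr_le_inl_iff.2 h.le, (lt_irrefl s h).elim]

theorem incompRel_of_insProj (hs : c.IsStar s) {z z' : (c.insL x).carrier}
    (h : IncompRel (· ≤ ·) (insProj s z) (insProj s z')) : IncompRel (· ≤ ·) z z' :=
  h.imp (mt (insProj_mono hs)) (mt (insProj_mono hs))

/-- The embedding `C[X] → D[X]` induced by an embedding of contexts. -/
def Embedding.insMap (f : Embedding c d) (hs : c.IsStar s) (hfs : d.IsStar (f s))
    (x : LPoset A) : Embedding (c.insL x) (d.insL x) where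
  toFun := Sum.map (fun p => ⟨f p.1, (f.lab_apply p.1).trans_ne p.2⟩) id
  le_iff_le := by
    rintro (p | a) (q | b)
    · exact f.le_iff_le
    · exact hfs.inl_le_inr_iff.trans (f.le_iff_le.trans hs.inl_le_inr_iff.symm)
    · exact hfs.inr_le_inl_iff.trans (f.le_iff_le.trans hs.inr_le_inl_iff.symm)
    · exact Iff.rfl
  lab_apply := Sum.rec (fun p => option_get_eq_get (f.lab_apply p.1) _ _) fun _ => rfl

/-- An embedding into a context that avoids `*`, as an embedding into any of its instances. -/
def Embedding.toInsL (g : Embedding (u.mapL some) d) (x : LPoset A) : Embedding u (d.insL x) where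
  toFun a := .inl ⟨g a, (g.lab_apply a).trans_ne (Option.some_ne_none _)⟩
  le_iff_le := g.le_iff_le
  lab_apply a := option_get_eq_get (g.lab_apply a) _ rfl

section InsL

variable (f : Embedding c d) (g : Embedding (u.mapL some) d)

theorem insProj_insMap (hs : c.IsStar s) (hfs : d.IsStar (f s)) (z : (c.insL x).carrier) :
    insProj (f s) (f.insMap hs hfs x z) = f (insProj s z) := by
  rcases z with p | a <;> rfl

theorem insMap_toInsL_cover (hs : c.IsStar s) (hfs : d.IsStar (f s))
    (hcover : ∀ z, (∃ a, f a = z) ∨ ∃ b, g b = z) (z : (d.insL x).carrier) :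
    (∃ a, f.insMap hs hfs x a = z) ∨ ∃ b, g.toInsL x b = z := by
  rcases z with ⟨z, hz⟩ | a
  · rcases hcover z with ⟨p, rfl⟩ | ⟨b, rfl⟩
    · exact .inl ⟨.inl ⟨p, (f.lab_apply p).symm.trans_ne hz⟩, rfl⟩
    · exact .inr ⟨b, rfl⟩
  · exact .inl ⟨.inr a, rfl⟩

theorem mk_insL_eq_seq_right (hc : c.uniqueStarL) (hlt : ∀ a b, f a < g b)
    (hcover : ∀ z, (∃ a, f a = z) ∨ ∃ b, g b = z) :
    Pomset.mk (d.insL x) = Pomset.mk (c.insL x) ⬝ Pomset.mk u := by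
  obtain ⟨s, hs⟩ : ∃ s, c.IsStar s := hc
  have hfs := hs.of_embedding f g hcover
  refine Embedding.mk_eq_seq (f.insMap hs hfs x) (g.toInsL x)
    (fun z b => lt_of_insProj_lt hfs ?_) (insMap_toInsL_cover f g hs hfs hcover)
  rw [insProj_insMap]
  exact hlt _ b

theorem mk_insL_eq_seq_left (hc : c.uniqueStarL) (hlt : ∀ a b, g b < f a)
    (hcover : ∀ z, (∃ a, f a = z) ∨ ∃ b, g b = z) :
    Pomset.mk (d.insL x) = Pomset.mk u ⬝ Pomset.mk (c.insL x) := by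
  obtain ⟨s, hs⟩ : ∃ s, c.IsStar s := hc
  have hfs := hs.of_embedding f g hcover
  refine Embedding.mk_eq_seq (g.toInsL x) (f.insMap hs hfs x)
    (fun b z => lt_of_insProj_lt hfs ?_) fun z => (insMap_toInsL_cover f g hs hfs hcover z).symm
  rw [insProj_insMap]
  exact hlt _ b

theorem mk_insL_eq_par_right (hc : c.uniqueStarL) (hincomp : ∀ a b, IncompRel (· ≤ ·) (f a) (g b))
    (hcover : ∀ z, (∃ a, f a = z) ∨ ∃ b, g b = z) :
    Pomset.mk (d.insL x) = Pomset.mk (c.insL x) ∥ Pomset.mk u := by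
  obtain ⟨s, hs⟩ : ∃ s, c.IsStar s := hc
  have hfs := hs.of_embedding f g hcover
  refine Embedding.mk_eq_par (f.insMap hs hfs x) (g.toInsL x)
    (fun z b => incompRel_of_insProj hfs ?_) (insMap_toInsL_cover f g hs hfs hcover)
  rw [insProj_insMap]
  exact hincomp _ b

end InsL
end LPoset

namespace Pomset

open LPoset

section Ins

variable {C : Pomset (Option A)}

theorem ins_single_none (X : Pomset A) : (single (none : Option A)).ins X = X := by
  obtain ⟨x, rfl⟩ := X.exists_mk_eq
  refine (Embedding.mk_eq_of_surjective (v := (singleL none).insL x)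
    ⟨Sum.inr, Iff.rfl, fun _ => rfl⟩ ?_).symm
  rintro (y | y)
  exacts [absurd rfl y.2, ⟨y, rfl⟩]

theorem ins_seq_right (hC : C.IsCtx) (U X : Pomset A) :
    (C ⬝ U.map some).ins X = C.ins X ⬝ U := by
  obtain ⟨c, rfl⟩ := C.exists_mk_eq
  obtain ⟨u, rfl⟩ := U.exists_mk_eq
  obtain ⟨x, rfl⟩ := X.exists_mk_eq
  exact mk_insL_eq_seq_right (.seqInl c _) (.seqInr c (u.mapL some)) hC Sum.Lex.inl_lt_inr
    (Sum.rec (fun a => .inl ⟨a, rfl⟩) fun b => .inr ⟨b, rfl⟩)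

theorem ins_seq_left (hC : C.IsCtx) (U X : Pomset A) :
    (U.map some ⬝ C).ins X = U ⬝ C.ins X := by
  obtain ⟨c, rfl⟩ := C.exists_mk_eq
  obtain ⟨u, rfl⟩ := U.exists_mk_eq
  obtain ⟨x, rfl⟩ := X.exists_mk_eq
  exact mk_insL_eq_seq_left (.seqInr _ c) (.seqInl (u.mapL some) c) hC
    (fun a b => Sum.Lex.inl_lt_inr b a)
    (Sum.rec (fun b => .inr ⟨b, rfl⟩) fun a => .inl ⟨a, rfl⟩)

theorem ins_par_right (hC : C.IsCtx) (U X : Pomset A) :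
    (C ∥ U.map some).ins X = C.ins X ∥ U := by
  obtain ⟨c, rfl⟩ := C.exists_mk_eq
  obtain ⟨u, rfl⟩ := U.exists_mk_eq
  obtain ⟨x, rfl⟩ := X.exists_mk_eq
  exact mk_insL_eq_par_right (.parInl c _) (.parInr c (u.mapL some)) hC
    (fun _ _ => ⟨Sum.not_inl_le_inr, Sum.not_inr_le_inl⟩)
    (Sum.rec (fun a => .inl ⟨a, rfl⟩) fun b => .inr ⟨b, rfl⟩)

theorem ins_par_left (hC : C.IsCtx) (U X : Pomset A) :
    (U.map some ∥ C).ins X = U ∥ C.ins X := by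
  rw [par_comm, ins_par_right hC, par_comm]

end Ins

/-! ### Series-parallel contexts as functions -/

theorem over_seq_iff {Γ : Set A} {U V : Pomset A} : (U ⬝ V).Over Γ ↔ U.Over Γ ∧ V.Over Γ := by
  obtain ⟨u, rfl⟩ := U.exists_mk_eq
  obtain ⟨v, rfl⟩ := V.exists_mk_eq
  exact Sum.forall

theorem over_par_iff {Γ : Set A} {U V : Pomset A} : (U ∥ V).Over Γ ↔ U.Over Γ ∧ V.Over Γ := by
  obtain ⟨u, rfl⟩ := U.exists_mk_eq
  obtain ⟨v, rfl⟩ := V.exists_mk_eq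
  exact Sum.forall

theorem over_range_map (f : A → B) (U : Pomset A) : (U.map f).Over (Set.range f) := by
  obtain ⟨u, rfl⟩ := U.exists_mk_eq
  exact fun a => ⟨u.lab a, rfl⟩

theorem map_empty (f : A → B) : (empty A).map f = empty B :=
  mk_eq_empty_iff.2 (inferInstanceAs (IsEmpty (Fin 0)))

theorem map_seq (f : A → B) (U V : Pomset A) : (U ⬝ V).map f = U.map f ⬝ V.map f := by
  obtain ⟨u, rfl⟩ := U.exists_mk_eq
  obtain ⟨v, rfl⟩ := V.exists_mk_eq
  refine Quotient.sound ⟨OrderIso.refl _, ?_⟩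
  rintro (x | x) <;> rfl

theorem map_par (f : A → B) (U V : Pomset A) : (U ∥ V).map f = U.map f ∥ V.map f := by
  obtain ⟨u, rfl⟩ := U.exists_mk_eq
  obtain ⟨v, rfl⟩ := V.exists_mk_eq
  refine Quotient.sound ⟨OrderIso.refl _, ?_⟩
  rintro (x | x) <;> rfl

theorem IsSP.map (f : A → B) {U : Pomset A} (hU : U.IsSP) : (U.map f).IsSP := by
  induction hU with
  | empty => exact map_empty f ▸ .empty
  | single a => exact .single (f a)
  | seq _ _ ihU ihV => exact map_seq f _ _ ▸ .seq ihU ihV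
  | par _ _ ihU ihV => exact map_par f _ _ ▸ .par ihU ihV

theorem IsSP.exists_map_eq {f : A → B} {U : Pomset B} (hU : U.IsSP)
    (hf : U.Over (Set.range f)) : ∃ V : Pomset A, V.IsSP ∧ V.map f = U := by
  induction hU with
  | empty => exact ⟨_, .empty, map_empty f⟩
  | single b =>
    obtain ⟨a, rfl⟩ := hf PUnit.unit
    exact ⟨_, .single a, rfl⟩
  | seq _ _ ihU ihV =>
    obtain ⟨U, hU, rfl⟩ := ihU (over_seq_iff.1 hf).1
    obtain ⟨V, hV, rfl⟩ := ihV (over_seq_iff.1 hf).2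
    exact ⟨U ⬝ V, .seq hU hV, map_seq f U V⟩
  | par _ _ ihU ihV =>
    obtain ⟨U, hU, rfl⟩ := ihU (over_par_iff.1 hf).1
    obtain ⟨V, hV, rfl⟩ := ihV (over_par_iff.1 hf).2
    exact ⟨U ∥ V, .par hU hV, map_par f U V⟩

end Pomset

theorem existsUnique_sum_iff {α β : Type*} {p : α ⊕ β → Prop} :
    (∃! z, p z) ↔ ((∃! a, p (.inl a)) ∧ ∀ b, ¬ p (.inr b)) ∨
      ((∀ a, ¬ p (.inl a)) ∧ ∃! b, p (.inr b)) := by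
  simp only [ExistsUnique, Sum.exists, Sum.forall, Sum.inl.injEq, Sum.inr.injEq, reduceCtorEq,
    imp_false]
  grind

namespace Pomset

variable {C D : Pomset (Option A)}

theorem isCtx_seq_iff : (C ⬝ D).IsCtx ↔
    (C.IsCtx ∧ D.Over (Set.range some)) ∨ (C.Over (Set.range some) ∧ D.IsCtx) := by
  obtain ⟨c, rfl⟩ := C.exists_mk_eq
  obtain ⟨d, rfl⟩ := D.exists_mk_eq
  refine existsUnique_sum_iff.trans (or_congr (and_congr_right' ?_) (and_congr_left' ?_)) <;>
    exact forall_congr' fun _ => Option.ne_none_iff_exists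

theorem isCtx_par_iff : (C ∥ D).IsCtx ↔
    (C.IsCtx ∧ D.Over (Set.range some)) ∨ (C.Over (Set.range some) ∧ D.IsCtx) := by
  obtain ⟨c, rfl⟩ := C.exists_mk_eq
  obtain ⟨d, rfl⟩ := D.exists_mk_eq
  refine existsUnique_sum_iff.trans (or_congr (and_congr_right' ?_) (and_congr_left' ?_)) <;>
    exact forall_congr' fun _ => Option.ne_none_iff_exists

theorem isCtx_single_iff {a : Option A} : (single a).IsCtx ↔ a = none :=
  ⟨fun ⟨_, h, _⟩ => h, fun h => ⟨PUnit.unit, h, fun _ _ => rfl⟩⟩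

theorem IsCtx.isCtxFun_ins (hC : C.IsCtx) (hSP : C.IsSP) : IsCtxFun C.ins := by
  induction hSP with
  | empty =>
    obtain ⟨s, -⟩ := hC
    exact Fin.elim0 s
  | single a =>
    obtain rfl := isCtx_single_iff.1 hC
    exact funext ins_single_none ▸ .hole
  | seq hP hQ ihP ihQ =>
    rcases isCtx_seq_iff.1 hC with ⟨hctx, hover⟩ | ⟨hover, hctx⟩
    · obtain ⟨U, hU, rfl⟩ := hQ.exists_map_eq hover
      exact funext (ins_seq_right hctx U) ▸ .seqR hU (ihP hctx)
    · obtain ⟨U, hU, rfl⟩ := hP.exists_map_eq hover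
      exact funext (ins_seq_left hctx U) ▸ .seqL hU (ihQ hctx)
  | par hP hQ ihP ihQ =>
    rcases isCtx_par_iff.1 hC with ⟨hctx, hover⟩ | ⟨hover, hctx⟩
    · obtain ⟨U, hU, rfl⟩ := hQ.exists_map_eq hover
      exact funext (ins_par_right hctx U) ▸ .parR hU (ihP hctx)
    · obtain ⟨U, hU, rfl⟩ := hP.exists_map_eq hover
      exact funext (ins_par_left hctx U) ▸ .par hU (ihQ hctx)

end Pomset

theorem IsCtxFun.exists_ins_eq {f : Pomset A → Pomset A} (hf : IsCtxFun f) :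
    ∃ C : Pomset (Option A), C.IsSPCtx ∧ C.ins = f := by
  open Pomset in
  induction hf with
  | hole =>
    exact ⟨starCtx A, ⟨isCtx_single_iff.2 rfl, .single none⟩, funext ins_single_none⟩
  | @seqL D f hD _ ih =>
    obtain ⟨C, ⟨hC, hSP⟩, rfl⟩ := ih
    exact ⟨D.map some ⬝ C, ⟨isCtx_seq_iff.2 (.inr ⟨over_range_map some D, hC⟩),
      .seq (hD.map some) hSP⟩, funext (ins_seq_left hC D)⟩
  | @seqR D f hD _ ih =>
    obtain ⟨C, ⟨hC, hSP⟩, rfl⟩ := ih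
    exact ⟨C ⬝ D.map some, ⟨isCtx_seq_iff.2 (.inl ⟨hC, over_range_map some D⟩),
      .seq hSP (hD.map some)⟩, funext (ins_seq_right hC D)⟩
  | @par D f hD _ ih =>
    obtain ⟨C, ⟨hC, hSP⟩, rfl⟩ := ih
    exact ⟨D.map some ∥ C, ⟨isCtx_par_iff.2 (.inr ⟨over_range_map some D, hC⟩),
      .par (hD.map some) hSP⟩, funext (ins_par_left hC D)⟩

/-! ### Closure under hypotheses -/

theorem Term.isSP_of_mem_lang {e : Term A} {U : Pomset A} (hU : U ∈ e.lang) : U.IsSP := by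
  induction e generalizing U with
  | zero => exact hU.elim
  | one => exact hU ▸ .empty
  | var a => exact hU ▸ .single a
  | add e f ihe ihf => exact hU.elim ihe ihf
  | seq e f ihe ihf =>
    obtain ⟨V, hV, W, hW, rfl⟩ := hU
    exact .seq (ihe hV) (ihf hW)
  | par e f ihe ihf =>
    obtain ⟨V, hV, W, hW, rfl⟩ := hU
    exact .par (ihe hV) (ihf hW)
  | star e ih =>
    obtain ⟨n, hn⟩ := Set.mem_iUnion.1 hU
    clear hU
    induction n generalizing U with
    | zero => exact hn ▸ .empty
    | succ n ihn =>
      obtain ⟨V, hV, W, hW, rfl⟩ := hn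
      exact .seq (ihn hV) (ih hW)

theorem Lang.singleton_seq_singleton (U V : Pomset A) :
    Lang.seq {U} {V} = ({U ⬝ V} : Set (Pomset A)) := by
  ext W
  simp only [Lang.seq, Set.mem_singleton_iff, exists_eq_left, Set.mem_ofPred_eq]

theorem Lang.singleton_par_singleton (U V : Pomset A) :
    Lang.par {U} {V} = ({U ∥ V} : Set (Pomset A)) := by
  ext W
  simp only [Lang.par, Set.mem_singleton_iff, exists_eq_left, Set.mem_ofPred_eq]

theorem Pomset.IsSP.exists_lang_eq_singleton {U : Pomset A} (hU : U.IsSP) :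
    ∃ e : Term A, e.lang = {U} := by
  induction hU with
  | empty => exact ⟨.one, rfl⟩
  | single a => exact ⟨.var a, rfl⟩
  | seq _ _ ihU ihV =>
    obtain ⟨e, he⟩ := ihU
    obtain ⟨f, hf⟩ := ihV
    exact ⟨.seq e f, by rw [Term.lang, he, hf, Lang.singleton_seq_singleton]⟩
  | par _ _ ihU ihV =>
    obtain ⟨e, he⟩ := ihU
    obtain ⟨f, hf⟩ := ihV
    exact ⟨.par e f, by rw [Term.lang, he, hf, Lang.singleton_par_singleton]⟩

theorem exists_exch_lang_eq_singleton {U V W X : Pomset A} (hU : U.IsSP) (hV : V.IsSP)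
    (hW : W.IsSP) (hX : X.IsSP) : ∃ e f : Term A, (e, f) ∈ exch A ∧
      e.lang = {(U ∥ V) ⬝ (W ∥ X)} ∧ f.lang = {(U ⬝ W) ∥ (V ⬝ X)} := by
  obtain ⟨a, ha⟩ := hU.exists_lang_eq_singleton
  obtain ⟨b, hb⟩ := hV.exists_lang_eq_singleton
  obtain ⟨c, hc⟩ := hW.exists_lang_eq_singleton
  obtain ⟨d, hd⟩ := hX.exists_lang_eq_singleton
  refine ⟨_, _, ⟨a, b, c, d, rfl⟩, ?_, ?_⟩ <;>
    simp only [Term.lang, ha, hb, hc, hd, Lang.singleton_seq_singleton,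
      Lang.singleton_par_singleton]

namespace closure

variable {H : HypSet A} {L : Lang A} {f : Pomset A → Pomset A} {U V : Pomset A}

theorem step_isCtxFun {e e' : Term A} (he : (e, e') ∈ H) (hf : IsCtxFun f)
    (h : ∀ V ∈ e'.lang, closure H L (f V)) (hU : U ∈ e.lang) : closure H L (f U) := by
  obtain ⟨C, hC, rfl⟩ := hf.exists_ins_eq
  exact .step he hC h hU

theorem exch_of_spSub (hUV : U ⊑ V) (hf : IsCtxFun f) (h : closure (exch A) L (f V)) :
    closure (exch A) L (f U) := by
  induction hUV generalizing f with
  | refl => exact h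
  | trans _ _ ihU ihV => exact ihU hf (ihV hf h)
  | seqCong hU hU' ihU ihU' =>
    exact ihU' (hf.comp (.seqL hU.isSP.1 .hole)) (ihU (hf.comp (.seqR hU'.isSP.2 .hole)) h)
  | parCong hU hU' ihU ihU' =>
    exact ihU' (hf.comp (.par hU.isSP.1 .hole)) (ihU (hf.comp (.parR hU'.isSP.2 .hole)) h)
  | exch hU hV hW hX =>
    obtain ⟨e, e', he, hlang, hlang'⟩ := exists_exch_lang_eq_singleton hU hV hW hX
    exact step_isCtxFun he hf (fun Y hY => (hlang' ▸ hY : Y = _) ▸ h) (hlang ▸ rfl)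

theorem of_spSub (hL : ∀ U V, U ⊑ V → V ∈ L → U ∈ L)
    (hH : ∀ p ∈ H, ∀ x ∈ p.1.lang, x.IsSubsingleton) (hUV : U ⊑ V) (h : closure H L V) :
    closure H L U := by
  induction h generalizing U with
  | base hV => exact .base (hL U _ hUV hV)
  | @step e e' he C hC _ x hx ih =>
    obtain ⟨g, hg, rfl, hle⟩ :=
      (hC.1.isCtxFun_ins hC.2).hasCtxBelow_of_spSub (hH _ he x hx) hUV rfl
    exact step_isCtxFun he hg (fun W hW => ih W hW (hle W (Term.isSP_of_mem_lang hW))) hx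

end closure

theorem isSubsingleton_of_mem_lang {e : Term A} (he : e = .one ∨ ∃ a, e = .var a) {x : Pomset A}
    (hx : x ∈ e.lang) : x.IsSubsingleton := by
  rcases he with rfl | ⟨a, rfl⟩
  exacts [.inl hx, .inr ⟨a, hx⟩]

theorem factorise_seq_exch_general {H : HypSet A}
    (hH : ∀ p ∈ H, ∀ x ∈ p.1.lang, x.IsSubsingleton) {L : Lang A} {U V : Pomset A}
    (hsub : U ⊑ V) (hmem : V ∈ cl H (cl (exch A) L)) : U ∈ cl H (cl (exch A) L) :=
  closure.of_spSub (fun _ _ hUV hV => closure.exch_of_spSub hUV .hole hV) hH hsub hmem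

/-- **Downward closure after `exch`**: if every hypothesis of `H` has left-hand side `1`
or a letter, and `L ⊆ SP`, then `cl_H(cl_exch(L))` is downward closed under `⊑^sp`. -/
theorem factorise_seq_exch (A : Type) (H : HypSet A)
    (hH : ∀ p ∈ H, p.1 = Term.one ∨ ∃ a : A, p.1 = Term.var a)
    (L : Lang A) (hL : L ⊆ SPset A) (U V : Pomset A) (hU : U.IsSP) (hV : V.IsSP)
    (hsub : spSub U V) (hmem : V ∈ cl H (cl (exch A) L)) :
    U ∈ cl H (cl (exch A) L) := by
  exact factorise_seq_exch_general (fun p hp _ => isSubsingleton_of_mem_lang (hH p hp)) hsub hmem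

end CKAH
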